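/- arXiv:2309.00365 — 2 statements merged into one kernel-verified Lean document; each statement's English description precedes it below -/
import Mathlib

section
/- For every ε ∈ (0,1) and pattern η ∈ S₃, lim_{ε→0⁺} limₙ (1/n)·log |{σ ∈ Sₙ avoiding η : A(σ) ≥ (1−ε)n}| = log 2, and similarly with A(σ) ≤ εn. -/
/-!
Both counts are controlled by the number `chg σ` of changes in the record word of `σ`, the word
that marks which positions carry left-to-right maxima.

* In every permutation `chg σ ≤ altLen σ`, and `altLen σ ≤ chg σ + 3` when `σ` avoids `321` or
  `312` (`chg_le_altLen`, `altLen_le_321`, `altLen_le_312`). A permutation avoiding `321` or `312`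
  is determined by its records, and each record pattern is realised in both classes, so `chg` is
  equidistributed on the two classes (`cnt_eq_312`, the Simion–Schmidt bijection). It suffices to
  study `cnt n p`, the number of `321`-avoiders of size `n` with `p (chg σ)`.
* Direct sums of `321`-avoiders add `chg` up to an error of `1`, so the relevant counts are
  supermultiplicative (`cnt_mul_le`) and their growth rates exist by Fekete's lemma (`fekete`).
  Padding by a fixed permutation absorbs the additive constants.
* The rates are at least `log 2`: Grassmannian permutations give `centralBinom m` avoiders of size
  `2 m` with at most two changes (`centralBinom_le_cnt`), and shuffles of two increasing sequences
  into the even and the odd positions, indexed by Dyck words, give `catalan m` avoiders of size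
  `2 m` with the maximal number of changes (`catalan_le_cnt`).
* The rates are at most `log 2 + log (1 + ε) - ε log ε`: a `321`-avoider is encoded by its set of
  change positions and its set of record values, so the sum of `t ^ chg σ` is at most
  `(2 (1 + t)) ^ n`, and a Chernoff bound with `t = ε` or `t = 1 / ε` applies (`cnt_mul_le_pow`).

Reversal and complementation preserve `altLen` and carry `321` and `312` to all six patterns
(`good_all`); letting `ε` tend to `0` squeezes both rates to `log 2`.
-/

open Equiv Filter Real Set

def Contains {n m : ℕ} (σ : Equiv.Perm (Fin n)) (η : Equiv.Perm (Fin m)) : Prop :=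
  ∃ f : Fin m → Fin n, StrictMono f ∧ ∀ j k, σ (f j) < σ (f k) ↔ η j < η k

def Avoids {n m : ℕ} (σ : Equiv.Perm (Fin n)) (η : Equiv.Perm (Fin m)) : Prop := ¬ Contains σ η

def Avoids231 {n : ℕ} (σ : Equiv.Perm (Fin n)) : Prop :=
  ¬ ∃ i₁ i₂ i₃ : Fin n, i₁ < i₂ ∧ i₂ < i₃ ∧ σ i₃ < σ i₁ ∧ σ i₁ < σ i₂

def Avoids132 {n : ℕ} (σ : Equiv.Perm (Fin n)) : Prop :=
  ¬ ∃ i₁ i₂ i₃ : Fin n, i₁ < i₂ ∧ i₂ < i₃ ∧ σ i₁ < σ i₃ ∧ σ i₃ < σ i₂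

def Avoids213 {n : ℕ} (σ : Equiv.Perm (Fin n)) : Prop :=
  ¬ ∃ i₁ i₂ i₃ : Fin n, i₁ < i₂ ∧ i₂ < i₃ ∧ σ i₂ < σ i₁ ∧ σ i₁ < σ i₃

def Avoids312 {n : ℕ} (σ : Equiv.Perm (Fin n)) : Prop :=
  ¬ ∃ i₁ i₂ i₃ : Fin n, i₁ < i₂ ∧ i₂ < i₃ ∧ σ i₂ < σ i₃ ∧ σ i₃ < σ i₁

/-- `f` indexes an alternating subsequence of `σ`. -/
def IsAltSub {n k : ℕ} (σ : Equiv.Perm (Fin n)) (f : Fin k → Fin n) : Prop :=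
  StrictMono f ∧ ∀ (j : ℕ) (h : j + 2 < k),
    (σ (f ⟨j, by omega⟩) < σ (f ⟨j + 1, by omega⟩) ↔
      ¬ σ (f ⟨j + 1, by omega⟩) < σ (f ⟨j + 2, by omega⟩))

/-- The length of the longest alternating subsequence. -/
noncomputable def altLen {n : ℕ} (σ : Equiv.Perm (Fin n)) : ℕ :=
  sSup {k | ∃ f : Fin k → Fin n, IsAltSub σ f}

/-- `f` indexes an alternating subsequence beginning with an ascent and ending with a descent. -/
def IsAltPM {n k : ℕ} (σ : Equiv.Perm (Fin n)) (f : Fin k → Fin n) : Prop :=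
  IsAltSub σ f ∧ 3 ≤ k ∧ Odd k ∧
    (∀ (h : 3 ≤ k), σ (f ⟨0, by omega⟩) < σ (f ⟨1, by omega⟩)) ∧
    (∀ (h : 3 ≤ k), σ (f ⟨k - 1, by omega⟩) < σ (f ⟨k - 2, by omega⟩))

/-- The length `A^{+,-}` of the longest alternating subsequence beginning with an ascent and
ending with a descent; `1` if there is no such subsequence, and `0` when `n = 0`. -/
noncomputable def apm {n : ℕ} (σ : Equiv.Perm (Fin n)) : ℕ :=
  if n = 0 then 0 else max (sSup {k | ∃ f : Fin k → Fin n, IsAltPM σ f}) 1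

/-- The length of the longest increasing subsequence. -/
noncomputable def lisLen {n : ℕ} (σ : Equiv.Perm (Fin n)) : ℕ :=
  sSup {k | ∃ f : Fin k → Fin n, StrictMono f ∧ StrictMono (⇑σ ∘ f)}

open scoped Classical in
/-- The moment generating function of `A_n` under the uniform 231-avoiding measure. -/
noncomputable def Malt (n : ℕ) (lam : ℝ) : ℝ :=
  (∑ σ ∈ Finset.univ.filter (fun σ : Equiv.Perm (Fin n) => Avoids231 σ),
    Real.exp (lam * altLen σ)) / (catalan n)

open scoped Classical in
noncomputable def Mapm (n : ℕ) (lam : ℝ) : ℝ :=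
  (∑ σ ∈ Finset.univ.filter (fun σ : Equiv.Perm (Fin n) => Avoids231 σ),
    Real.exp (lam * apm σ)) / (catalan n)

open scoped Classical in
noncomputable def Minc (n : ℕ) (lam : ℝ) : ℝ :=
  (∑ σ ∈ Finset.univ.filter (fun σ : Equiv.Perm (Fin n) => Avoids231 σ),
    Real.exp (lam * lisLen σ)) / (catalan n)

/-! ### Records -/

/-- `i` is (the position of) a record, i.e. a left-to-right maximum, of `σ`. -/
def IsRec {n : ℕ} (σ : Equiv.Perm (Fin n)) (i : Fin n) : Prop := ∀ j < i, σ j < σ i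

def Avoids321 {n : ℕ} (σ : Equiv.Perm (Fin n)) : Prop :=
  ¬ ∃ i₁ i₂ i₃ : Fin n, i₁ < i₂ ∧ i₂ < i₃ ∧ σ i₃ < σ i₂ ∧ σ i₂ < σ i₁

/-- The record word of `σ`, extended by `False` beyond position `n`. -/
def RecWord {n : ℕ} (σ : Equiv.Perm (Fin n)) (i : ℕ) : Prop := ∃ h : i < n, IsRec σ ⟨i, h⟩

/-- The record word of `σ` changes between positions `i` and `i + 1`. -/
def IsChg {n : ℕ} (σ : Equiv.Perm (Fin n)) (i : ℕ) : Prop :=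
  ¬ (RecWord σ i ↔ RecWord σ (i + 1))

open scoped Classical in
/-- The number of changes in the record word of `σ`. For `n = 0` the truncated `n - 1` is `0`,
so the value is `0`. -/
noncomputable def chg {n : ℕ} (σ : Equiv.Perm (Fin n)) : ℕ := Nat.count (IsChg σ) (n - 1)

lemma recWord_val {n : ℕ} (σ : Equiv.Perm (Fin n)) (i : Fin n) : RecWord σ i ↔ IsRec σ i :=
  ⟨fun ⟨_, h⟩ => h, fun h => ⟨i.2, h⟩⟩

lemma recWord_zero {n : ℕ} (σ : Equiv.Perm (Fin n)) (h : 0 < n) : RecWord σ 0 :=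
  ⟨h, fun j hj => absurd hj (by simp [Fin.lt_def])⟩

lemma not_isRec {n : ℕ} {σ : Equiv.Perm (Fin n)} {i : Fin n} (h : ¬ IsRec σ i) :
    ∃ r < i, σ i < σ r := by
  unfold IsRec at h
  push Not at h
  obtain ⟨r, hr, h⟩ := h
  exact ⟨r, hr, lt_of_le_of_ne h (fun e => hr.ne' (σ.injective e))⟩

/-! ### Permutations with prescribed records -/

/-- At the first position where two permutations with the same record data differ, the one with
the smaller entry contains `312` and the one with the larger entry contains `321`. -/
lemma first_diff {n : ℕ} {σ τ : Equiv.Perm (Fin n)}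
    (h : (Avoids321 σ ∧ Avoids321 τ) ∨ (Avoids312 σ ∧ Avoids312 τ))
    (hr : ∀ i, IsRec σ i ↔ IsRec τ i)
    (hV : ∀ v, IsRec σ (σ.symm v) ↔ IsRec τ (τ.symm v)) (i : Fin n)
    (hlt : ∀ j < i, σ j = τ j) : ¬ σ i < τ i := by
  intro hab
  have hl : i < τ.symm (σ i) := by
    by_contra! hle
    rcases hle.lt_or_eq with h1 | h1
    · have := hlt _ h1
      rw [Equiv.apply_symm_apply] at this
      exact h1.ne (σ.injective this)
    · rw [Equiv.symm_apply_eq] at h1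
      exact hab.ne h1
  have hk : i < σ.symm (τ i) := by
    by_contra! hle
    rcases hle.lt_or_eq with h1 | h1
    · have := hlt _ h1
      rw [Equiv.apply_symm_apply] at this
      exact h1.ne (τ.injective this.symm)
    · rw [Equiv.symm_apply_eq] at h1
      exact hab.ne' h1
  by_cases hi : IsRec σ i
  · have h1 := (hV (σ i)).1 (by simpa using hi)
    have := h1 i hl
    rw [Equiv.apply_symm_apply] at this
    exact lt_asymm this hab
  · obtain ⟨r, hri, h2⟩ := not_isRec (fun h => hi ((hr i).2 h))
    rcases h with ⟨-, h⟩ | ⟨h, -⟩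
    · exact h ⟨r, i, _, hri, hl, by simpa using hab, h2⟩
    · exact h ⟨r, i, _, hri, hk, by simpa using hab, by simpa [hlt r hri] using h2⟩

lemma eq_of_rec {n : ℕ} {σ τ : Equiv.Perm (Fin n)}
    (h : (Avoids321 σ ∧ Avoids321 τ) ∨ (Avoids312 σ ∧ Avoids312 τ))
    (hr : ∀ i, IsRec σ i ↔ IsRec τ i)
    (hV : ∀ v, IsRec σ (σ.symm v) ↔ IsRec τ (τ.symm v)) : σ = τ := by
  ext i
  congr 1
  induction i using WellFoundedLT.induction with
  | ind i ih =>
    have h1 := first_diff h hr hV i ih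
    have h2 := first_diff (h.imp And.symm And.symm) (fun i => (hr i).symm)
      (fun i => (hV i).symm) i (fun j hj => (ih j hj).symm)
    exact le_antisymm (not_lt.1 h2) (not_lt.1 h1)

/-- Two permutations have the same records, at the same positions and with the same values. -/
def SameRec {n : ℕ} (σ τ : Equiv.Perm (Fin n)) : Prop :=
  (∀ i, IsRec σ i ↔ IsRec τ i) ∧ ∀ i, IsRec σ i → σ i = τ i

lemma SameRec.refl {n : ℕ} (σ : Equiv.Perm (Fin n)) : SameRec σ σ :=
  ⟨fun _ => Iff.rfl, fun _ _ => rfl⟩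

lemma SameRec.symm {n : ℕ} {σ τ : Equiv.Perm (Fin n)} (h : SameRec σ τ) : SameRec τ σ :=
  ⟨fun i => (h.1 i).symm, fun i hi => (h.2 i ((h.1 i).2 hi)).symm⟩

lemma SameRec.trans {n : ℕ} {σ τ ρ : Equiv.Perm (Fin n)} (h : SameRec σ τ) (h' : SameRec τ ρ) :
    SameRec σ ρ :=
  ⟨fun i => (h.1 i).trans (h'.1 i),
    fun i hi => (h.2 i hi).trans (h'.2 i ((h.1 i).1 hi))⟩

lemma SameRec.val {n : ℕ} {σ τ : Equiv.Perm (Fin n)} (h : SameRec σ τ) (v : Fin n) :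
    IsRec σ (σ.symm v) ↔ IsRec τ (τ.symm v) := by
  have key : ∀ {σ τ : Equiv.Perm (Fin n)}, SameRec σ τ → IsRec σ (σ.symm v) →
      IsRec τ (τ.symm v) := by
    intro σ τ h hv
    have h1 := h.2 _ hv
    rw [Equiv.apply_symm_apply] at h1
    rw [h1, Equiv.symm_apply_apply]
    exact (h.1 _).1 hv
  exact ⟨key h, key h.symm⟩

lemma SameRec.chg_eq {n : ℕ} {σ τ : Equiv.Perm (Fin n)} (h : SameRec σ τ) : chg σ = chg τ := by
  have h1 : RecWord σ = RecWord τ := by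
    funext i
    unfold RecWord
    simp only [h.1]
  have h2 : IsChg σ = IsChg τ := by
    funext i
    unfold IsChg
    rw [h1]
  unfold chg
  rw [h2]

lemma isRec_swap {n : ℕ} {σ : Equiv.Perm (Fin n)} {i j k : Fin n} (hij : i < j) (hjk : j < k)
    (hj : σ j < σ i) (hk : σ k < σ i) (l : Fin n) (hl : IsRec σ l) :
    IsRec ((Equiv.swap j k).trans σ) l ∧ σ l = (Equiv.swap j k).trans σ l := by
  have hlj : l ≠ j := fun e => lt_asymm hj (by simpa [e] using hl i (e ▸ hij))
  have hlk : l ≠ k := fun e => lt_asymm hk (by simpa [e] using hl i (e ▸ hij.trans hjk))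
  have hval : (Equiv.swap j k).trans σ l = σ l := by
    simp [Equiv.swap_apply_of_ne_of_ne hlj hlk]
  refine ⟨fun x hx => ?_, hval.symm⟩
  rw [hval]
  simp only [Equiv.trans_apply]
  by_cases hxj : x = j
  · subst hxj
    rw [Equiv.swap_apply_left]
    exact hk.trans (hl i (hij.trans hx))
  by_cases hxk : x = k
  · subst hxk
    rw [Equiv.swap_apply_right]
    exact hj.trans (hl i (hij.trans (hjk.trans hx)))
  rw [Equiv.swap_apply_of_ne_of_ne hxj hxk]
  exact hl x hx

/-- Exchanging two non-record entries that lie below a common earlier entry keeps all records. -/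
lemma sameRec_swap {n : ℕ} {σ : Equiv.Perm (Fin n)} {i j k : Fin n} (hij : i < j) (hjk : j < k)
    (hj : σ j < σ i) (hk : σ k < σ i) : SameRec σ ((Equiv.swap j k).trans σ) := by
  have hi : (Equiv.swap j k).trans σ i = σ i := by
    simp [Equiv.swap_apply_of_ne_of_ne hij.ne (hij.trans hjk).ne]
  have e : (Equiv.swap j k).trans ((Equiv.swap j k).trans σ) = σ := by
    ext x; simp
  refine ⟨fun l => ⟨fun h => (isRec_swap hij hjk hj hk l h).1, fun h => ?_⟩,
    fun l h => (isRec_swap hij hjk hj hk l h).2⟩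
  have := (isRec_swap (σ := (Equiv.swap j k).trans σ) hij hjk (by rw [hi]; simpa using hk)
    (by rw [hi]; simpa using hj) l h).1
  rwa [e] at this

/-- Among the permutations with given records, the lexicographically largest one avoids `312`. -/
lemma exists_avoids312 {n : ℕ} (σ : Equiv.Perm (Fin n)) : ∃ τ, Avoids312 τ ∧ SameRec σ τ := by
  classical
  obtain ⟨τ, hτ, hmax⟩ := Finset.exists_max_image
    (Finset.univ.filter (fun τ : Equiv.Perm (Fin n) => SameRec σ τ))
    (fun τ => toLex (⇑τ)) ⟨σ, by simpa using SameRec.refl σ⟩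
  have hτ : SameRec σ τ := by simpa using hτ
  refine ⟨τ, ?_, hτ⟩
  rintro ⟨i, j, k, hij, hjk, h1, h2⟩
  have hs := hmax ((Equiv.swap j k).trans τ)
    (by simpa using hτ.trans (sameRec_swap hij hjk (h1.trans h2) h2))
  refine absurd hs (not_le.2 ⟨j, fun x hx => ?_, ?_⟩)
  · simp [Equiv.swap_apply_of_ne_of_ne hx.ne (hx.trans hjk).ne]
  · simpa using h1

/-- Among the permutations with given records, the lexicographically smallest one avoids `321`. -/
lemma exists_avoids321 {n : ℕ} (σ : Equiv.Perm (Fin n)) : ∃ τ, Avoids321 τ ∧ SameRec σ τ := by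
  classical
  obtain ⟨τ, hτ, hmin⟩ := Finset.exists_min_image
    (Finset.univ.filter (fun τ : Equiv.Perm (Fin n) => SameRec σ τ))
    (fun τ => toLex (⇑τ)) ⟨σ, by simpa using SameRec.refl σ⟩
  have hτ : SameRec σ τ := by simpa using hτ
  refine ⟨τ, ?_, hτ⟩
  rintro ⟨i, j, k, hij, hjk, h1, h2⟩
  have hs := hmin ((Equiv.swap j k).trans τ)
    (by simpa using hτ.trans (sameRec_swap hij hjk h2 (h1.trans h2)))
  refine absurd hs (not_le.2 ⟨j, fun x hx => ?_, ?_⟩)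
  · simp [Equiv.swap_apply_of_ne_of_ne hx.ne (hx.trans hjk).ne]
  · simpa using h1

/-- The number of `321`-avoiding permutations of `Fin n` whose number of changes in the record
word satisfies `p`. -/
noncomputable def cnt (n : ℕ) (p : ℕ → Prop) : ℕ :=
  {σ : Equiv.Perm (Fin n) | Avoids321 σ ∧ p (chg σ)}.ncard

/-- The Simion–Schmidt equidistribution: `chg` has the same distribution on `312`-avoiding and
on `321`-avoiding permutations. -/
lemma cnt_eq_312 (n : ℕ) (p : ℕ → Prop) :
    {σ : Equiv.Perm (Fin n) | Avoids312 σ ∧ p (chg σ)}.ncard = cnt n p := by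
  unfold cnt
  choose f hf hf' using exists_avoids321 (n := n)
  choose g hg hg' using exists_avoids312 (n := n)
  apply le_antisymm
  · refine Set.ncard_le_ncard_of_injOn f (fun σ hσ => ⟨hf σ, ?_⟩) ?_ (Set.toFinite _)
    · rw [← (hf' σ).chg_eq]; exact hσ.2
    · intro σ hσ τ hτ e
      have hs : SameRec σ τ := (hf' σ).trans (e ▸ (hf' τ).symm)
      exact eq_of_rec (Or.inr ⟨hσ.1, hτ.1⟩) hs.1 hs.val
  · refine Set.ncard_le_ncard_of_injOn g (fun σ hσ => ⟨hg σ, ?_⟩) ?_ (Set.toFinite _)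
    · rw [← (hg' σ).chg_eq]; exact hσ.2
    · intro σ hσ τ hτ e
      have hs : SameRec σ τ := (hg' σ).trans (e ▸ (hg' τ).symm)
      exact eq_of_rec (Or.inl ⟨hσ.1, hτ.1⟩) hs.1 hs.val

/-! ### Alternating subsequences and changes in the record word -/

lemma recWord_iff_even {n : ℕ} (σ : Equiv.Perm (Fin n)) [DecidablePred (IsChg σ)] (i : ℕ)
    (hi : i < n) : RecWord σ i ↔ Even (Nat.count (IsChg σ) i) := by
  induction i with
  | zero => simpa using recWord_zero σ hi
  | succ i ih =>
    have ih := ih (by omega)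
    rw [Nat.count_succ]
    by_cases h : IsChg σ i
    · rw [if_pos h, Nat.even_add_one, ← ih]
      unfold IsChg at h
      tauto
    · rw [if_neg h, add_zero, ← ih]
      unfold IsChg at h
      tauto

/-- A record dominates the whole stretch of non-records that follows it. -/
lemma lt_of_not_isRec {n : ℕ} {σ : Equiv.Perm (Fin n)} {a : Fin n} (ha : IsRec σ a) (x : Fin n)
    (hax : a < x) (h : ∀ y, a < y → y ≤ x → ¬ IsRec σ y) : σ x < σ a := by
  induction x using WellFoundedLT.induction with
  | ind x ih =>
    obtain ⟨r, hr, h1⟩ := not_isRec (h x hax le_rfl)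
    rcases lt_trichotomy r a with h2 | h2 | h2
    · exact h1.trans (ha r h2)
    · exact h2 ▸ h1
    · exact h1.trans (ih r hr h2 (fun y hy hy' => h y hy (hy'.trans hr.le)))

lemma exists_count_eq {p : ℕ → Prop} [DecidablePred p] (N j : ℕ) (h : j < Nat.count p N) :
    ∃ z < N, p z ∧ Nat.count p z = j := by
  induction N with
  | zero => simp at h
  | succ N ih =>
    by_cases h' : j < Nat.count p N
    · obtain ⟨z, hz, h⟩ := ih h'
      exact ⟨z, by omega, h⟩
    · rw [Nat.count_succ] at h
      split_ifs at h with hp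
      · exact ⟨N, by omega, hp, by omega⟩
      · omega

lemma altSub_le {n k : ℕ} {σ : Equiv.Perm (Fin n)} {f : Fin k → Fin n} (hf : IsAltSub σ f) :
    k ≤ n := by
  simpa using Fintype.card_le_of_injective f hf.1.injective

lemma le_altLen {n k : ℕ} {σ : Equiv.Perm (Fin n)} {f : Fin k → Fin n} (hf : IsAltSub σ f) :
    k ≤ altLen σ :=
  le_csSup ⟨n, fun _ ⟨_, h⟩ => altSub_le h⟩ ⟨f, hf⟩

lemma altLen_le {n m : ℕ} {σ : Equiv.Perm (Fin n)}
    (h : ∀ k (f : Fin k → Fin n), IsAltSub σ f → k ≤ m) : altLen σ ≤ m :=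
  csSup_le ⟨0, Fin.elim0, fun i => i.elim0, fun j h => by omega⟩ fun k ⟨f, hf⟩ => h k f hf

/-- In any permutation, the positions at which the record word is about to change carry an
alternating subsequence. -/
lemma chg_le_altLen {n : ℕ} (σ : Equiv.Perm (Fin n)) : chg σ ≤ altLen σ := by
  classical
  have hc : chg σ = Nat.count (IsChg σ) (n - 1) := by unfold chg; congr
  have hz : ∀ j : Fin (chg σ), ∃ z < n - 1, IsChg σ z ∧ Nat.count (IsChg σ) z = j := fun j =>
    exists_count_eq _ _ (hc ▸ j.2)
  choose z hz hp hzc using hz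
  have hmono : ∀ i j : Fin (chg σ), i < j → z i < z j := fun i j hij =>
    Nat.lt_of_count_lt_count (p := IsChg σ) (by rw [hzc, hzc]; exact hij)
  let f : Fin (chg σ) → Fin n := fun j => ⟨z j, by have := hz j; omega⟩
  have hrec : ∀ j, IsRec σ (f j) ↔ Even (j : ℕ) := fun j => by
    rw [← recWord_val, recWord_iff_even σ _ (f j).2, ← hzc j]
  -- A step of the subsequence ascends exactly when it ends at a record.
  have hstep : ∀ (j : ℕ) (h : j + 1 < chg σ),
      σ (f ⟨j, by omega⟩) < σ (f ⟨j + 1, h⟩) ↔ Even (j + 1) := by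
    intro j h
    have hlt : f ⟨j, by omega⟩ < f ⟨j + 1, h⟩ :=
      hmono ⟨j, by omega⟩ ⟨j + 1, h⟩ (by simp [Fin.lt_def])
    by_cases he : Even (j + 1)
    · simp only [he, iff_true]
      exact (hrec ⟨j + 1, h⟩).2 he _ hlt
    · simp only [he, iff_false, not_lt]
      have hj : Even j := by simpa [Nat.even_add_one] using he
      refine (lt_of_not_isRec ((hrec ⟨j, by omega⟩).2 hj) _ hlt fun y hy hy' => ?_).le
      rw [← recWord_val, recWord_iff_even σ _ y.2]
      have h1 : Nat.count (IsChg σ) y ≤ j + 1 := by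
        exact (Nat.count_monotone (IsChg σ) hy').trans (hzc ⟨j + 1, h⟩).le
      have h2 : j < Nat.count (IsChg σ) y := by
        have := Nat.count_strict_mono (hp ⟨j, by omega⟩) hy
        rwa [hzc] at this
      rwa [show Nat.count (IsChg σ) y = j + 1 by omega]
  refine le_altLen (f := f) ⟨fun i j hij => hmono i j hij, fun j h => ?_⟩
  rw [hstep j (by omega), hstep (j + 1) h, ← Nat.even_add_one]
  grind

/-- A sequence of `K` positions along which the record word alternates forces `K - 1` changes. -/
lemma le_chg {n : ℕ} (σ : Equiv.Perm (Fin n)) (K : ℕ) (y : ℕ → ℕ) (hy : ∀ j < K, y j < n)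
    (hmono : ∀ j, j + 1 < K → y j < y (j + 1))
    (halt : ∀ j, j + 1 < K → ¬ (RecWord σ (y j) ↔ RecWord σ (y (j + 1)))) : K ≤ chg σ + 1 := by
  classical
  have hc : chg σ = Nat.count (IsChg σ) (n - 1) := by unfold chg; congr
  have h : ∀ j < K, j ≤ Nat.count (IsChg σ) (y j) := by
    intro j
    induction j with
    | zero => simp
    | succ j ih =>
      intro hj
      have ih := ih (by omega)
      have h1 := halt j hj
      rw [recWord_iff_even σ _ (hy _ (by omega)), recWord_iff_even σ _ (hy _ hj)] at h1
      have h2 := Nat.count_monotone (IsChg σ) (hmono j hj).le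
      have : Nat.count (IsChg σ) (y j) ≠ Nat.count (IsChg σ) (y (j + 1)) := fun e => h1 (by rw [e])
      omega
  rcases K.eq_zero_or_pos with h0 | h0
  · omega
  · have h1 := h (K - 1) (by omega)
    have h2 := hy (K - 1) (by omega)
    have h3 := Nat.count_monotone (IsChg σ) (show y (K - 1) ≤ n - 1 by omega)
    omega

/-- In a `321`-avoiding permutation the top of a descent is a record and the bottom is not, so
the record word alternates along the inner part of any alternating subsequence. -/
lemma altLen_le_321 {n : ℕ} {σ : Equiv.Perm (Fin n)} (hσ : Avoids321 σ) :
    altLen σ ≤ chg σ + 3 := by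
  refine altLen_le fun k f hf => ?_
  have hm : ∀ (j : ℕ) (h : j + 1 < k), f ⟨j, by omega⟩ < f ⟨j + 1, h⟩ := fun j h =>
    hf.1 (by simp [Fin.lt_def])
  have hrec : ∀ (j : ℕ) (h : j + 2 < k), IsRec σ (f ⟨j + 1, by omega⟩) ↔
      ¬ σ (f ⟨j + 1, by omega⟩) < σ (f ⟨j + 2, h⟩) := by
    intro j h
    constructor
    · intro hr hlt
      exact ((hf.2 j h).1 (hr _ (hm j (by omega)))) hlt
    · intro hlt
      by_contra hr
      obtain ⟨r, hr, h1⟩ := not_isRec hr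
      refine hσ ⟨r, _, _, hr, hm (j + 1) h, ?_, h1⟩
      exact lt_of_le_of_ne (not_lt.1 hlt) fun e => (hm (j + 1) h).ne' (σ.injective e)
  have := le_chg σ (k - 2) (fun j => if h : j + 1 < k then (f ⟨j + 1, h⟩ : ℕ) else 0)
    (fun j hj => by simp [show j + 1 < k by omega])
    (fun j hj => by
      simpa [show j + 1 < k by omega, show j + 1 + 1 < k by omega] using hm (j + 1) (by omega))
    (fun j hj => by
      simp only [show j + 1 < k by omega, show j + 1 + 1 < k by omega, dif_pos]
      rw [recWord_val, recWord_val, hrec j (by omega), hrec (j + 1) (by omega)]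
      have := hf.2 (j + 1) (by omega)
      tauto)
  omega

/-- Between two positions there is an adjacent ascent, resp. descent, according to the order of
the two entries; in a `312`-avoiding permutation it ends at a record, resp. at a non-record. -/
lemma exists_rec_between {n : ℕ} {σ : Equiv.Perm (Fin n)} (hσ : Avoids312 σ) (a b : Fin n)
    (hab : a < b) : ∃ y, a < y ∧ y ≤ b ∧ (IsRec σ y ↔ σ a < σ b) := by
  by_contra! hcon
  by_cases h : σ a < σ b
  · -- If no position in `(a, b]` is a record then all entries there are descents.
    have hr : ∀ y, a < y → y ≤ b → ¬ IsRec σ y := fun y h1 h2 => by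
      rcases hcon y h1 h2 with h3 | h3
      · exact absurd h (not_lt.2 h3.2)
      · exact h3.1
    obtain ⟨s, hs, hs2⟩ : ∃ s ≤ a, σ b < σ s := by
      clear h hcon
      induction b using WellFoundedLT.induction with
      | ind b ih =>
        obtain ⟨r, hr1, hr2⟩ := not_isRec (hr b hab le_rfl)
        rcases le_or_gt r a with h | h
        · exact ⟨r, h, hr2⟩
        · obtain ⟨s, hs, hs2⟩ := ih r hr1 h (fun y h1 h2 => hr y h1 (h2.trans hr1.le))
          exact ⟨s, hs, hr2.trans hs2⟩
    rcases hs.lt_or_eq with hs | rfl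
    · exact hσ ⟨s, a, b, hs, hab, h, hs2⟩
    · exact lt_asymm h hs2
  · have := hcon b hab le_rfl
    exact h ((by tauto : IsRec σ b) a hab)

lemma altLen_le_312 {n : ℕ} {σ : Equiv.Perm (Fin n)} (hσ : Avoids312 σ) :
    altLen σ ≤ chg σ + 3 := by
  refine altLen_le fun k f hf => ?_
  have hm : ∀ (j : ℕ) (h : j + 1 < k), f ⟨j, by omega⟩ < f ⟨j + 1, h⟩ := fun j h =>
    hf.1 (by simp [Fin.lt_def])
  have hy : ∀ j : ℕ, ∃ y : ℕ, ∀ h : j + 1 < k, (f ⟨j, by omega⟩ : ℕ) < y ∧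
      y ≤ (f ⟨j + 1, h⟩ : ℕ) ∧
      (RecWord σ y ↔ σ (f ⟨j, by omega⟩) < σ (f ⟨j + 1, h⟩)) := by
    intro j
    by_cases h : j + 1 < k
    · obtain ⟨y, h1, h2, h3⟩ := exists_rec_between hσ _ _ (hm j h)
      exact ⟨y, fun _ => ⟨h1, h2, (recWord_val σ y).trans h3⟩⟩
    · exact ⟨0, fun h' => absurd h' h⟩
  choose y hy using hy
  have := le_chg σ (k - 1) y
    (fun j hj => (hy j (by omega)).2.1.trans_lt (f _).2)
    (fun j hj => (hy j (by omega)).2.1.trans_lt (hy (j + 1) (by omega)).1)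
    (fun j hj => by
      rw [(hy j (by omega)).2.2, (hy (j + 1) (by omega)).2.2]
      have := hf.2 j (by omega)
      tauto)
  omega

/-! ### Direct sums -/

/-- The direct sum `σ ⊕ τ`: `σ` on the first `m` positions and values, `τ` on the last `n`. -/
def dsum {m n : ℕ} (σ : Equiv.Perm (Fin m)) (τ : Equiv.Perm (Fin n)) : Equiv.Perm (Fin (m + n)) :=
  finSumFinEquiv.permCongr (Equiv.sumCongr σ τ)

lemma dsum_left {m n : ℕ} (σ : Equiv.Perm (Fin m)) (τ : Equiv.Perm (Fin n)) (i : Fin m) :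
    dsum σ τ (Fin.castAdd n i) = Fin.castAdd n (σ i) := by
  simp [dsum, Equiv.permCongr_apply]

lemma dsum_right {m n : ℕ} (σ : Equiv.Perm (Fin m)) (τ : Equiv.Perm (Fin n)) (i : Fin n) :
    dsum σ τ (Fin.natAdd m i) = Fin.natAdd m (τ i) := by
  simp [dsum, Equiv.permCongr_apply]

lemma dsum_inj {m n : ℕ} {σ σ' : Equiv.Perm (Fin m)} {τ τ' : Equiv.Perm (Fin n)}
    (h : dsum σ τ = dsum σ' τ') : σ = σ' ∧ τ = τ' := by
  constructor
  · ext i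
    have := congrArg (fun ρ => ρ (Fin.castAdd n i)) h
    simp only [dsum_left] at this
    simpa [Fin.ext_iff] using this
  · ext i
    have := congrArg (fun ρ => ρ (Fin.natAdd m i)) h
    simp only [dsum_right] at this
    simpa [Fin.ext_iff] using this

lemma avoids321_dsum {m n : ℕ} {σ : Equiv.Perm (Fin m)} {τ : Equiv.Perm (Fin n)}
    (hσ : Avoids321 σ) (hτ : Avoids321 τ) : Avoids321 (dsum σ τ) := by
  rintro ⟨i, j, k, hij, hjk, h1, h2⟩
  induction i using Fin.addCases with
  | left i =>
    induction j using Fin.addCases with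
    | right j =>
      simp only [dsum_left, dsum_right, Fin.lt_def, Fin.val_castAdd, Fin.val_natAdd] at *
      omega
    | left j =>
      induction k using Fin.addCases with
      | right k =>
        simp only [dsum_left, dsum_right, Fin.lt_def, Fin.val_castAdd, Fin.val_natAdd] at *
        omega
      | left k =>
        simp only [dsum_left, Fin.lt_def, Fin.val_castAdd] at *
        exact hσ ⟨i, j, k, hij, hjk, h1, h2⟩
  | right i =>
    induction j using Fin.addCases with
    | left j =>
      simp only [Fin.lt_def, Fin.val_castAdd, Fin.val_natAdd] at *
      omega
    | right j =>
      induction k using Fin.addCases with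
      | left k =>
        simp only [Fin.lt_def, Fin.val_castAdd, Fin.val_natAdd] at *
        omega
      | right k =>
        simp only [dsum_right, Fin.lt_def, Fin.val_natAdd, add_lt_add_iff_left] at *
        exact hτ ⟨i, j, k, hij, hjk, h1, h2⟩

lemma isRec_dsum_left {m n : ℕ} (σ : Equiv.Perm (Fin m)) (τ : Equiv.Perm (Fin n)) (i : Fin m) :
    IsRec (dsum σ τ) (Fin.castAdd n i) ↔ IsRec σ i := by
  constructor
  · intro h j hj
    have := h (Fin.castAdd n j) hj
    rwa [dsum_left, dsum_left] at this
  · intro h j hj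
    induction j using Fin.addCases with
    | left j =>
      rw [dsum_left, dsum_left]
      exact h j hj
    | right j =>
      simp only [Fin.lt_def, Fin.val_castAdd, Fin.val_natAdd] at hj
      omega

lemma isRec_dsum_right {m n : ℕ} (σ : Equiv.Perm (Fin m)) (τ : Equiv.Perm (Fin n)) (i : Fin n) :
    IsRec (dsum σ τ) (Fin.natAdd m i) ↔ IsRec τ i := by
  constructor
  · intro h j hj
    have := h (Fin.natAdd m j) (by simpa only [Fin.natAdd_lt_natAdd_iff] using hj)
    simpa only [dsum_right, Fin.natAdd_lt_natAdd_iff] using this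
  · intro h j hj
    induction j using Fin.addCases with
    | left j =>
      rw [dsum_left, dsum_right]
      simp only [Fin.lt_def, Fin.val_castAdd, Fin.val_natAdd]
      omega
    | right j =>
      simp only [dsum_right, Fin.natAdd_lt_natAdd_iff] at hj ⊢
      exact h j hj

lemma recWord_dsum_left {m n : ℕ} (σ : Equiv.Perm (Fin m)) (τ : Equiv.Perm (Fin n)) (i : ℕ)
    (hi : i < m) : RecWord (dsum σ τ) i ↔ RecWord σ i :=
  ((recWord_val _ (Fin.castAdd n ⟨i, hi⟩)).trans (isRec_dsum_left σ τ ⟨i, hi⟩)).trans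
    (recWord_val σ ⟨i, hi⟩).symm

lemma recWord_dsum_right {m n : ℕ} (σ : Equiv.Perm (Fin m)) (τ : Equiv.Perm (Fin n)) (i : ℕ) :
    RecWord (dsum σ τ) (m + i) ↔ RecWord τ i := by
  by_cases hi : i < n
  · exact ((recWord_val _ (Fin.natAdd m ⟨i, hi⟩)).trans (isRec_dsum_right σ τ ⟨i, hi⟩)).trans
      (recWord_val τ ⟨i, hi⟩).symm
  · exact ⟨fun ⟨h, _⟩ => absurd h (by omega), fun ⟨h, _⟩ => absurd h hi⟩

lemma count_congr' {p q : ℕ → Prop} [DecidablePred p] [DecidablePred q] {n : ℕ}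
    (h : ∀ i < n, p i ↔ q i) : Nat.count p n = Nat.count q n :=
  le_antisymm (Nat.count_mono_left fun i hi => (h i hi).1)
    (Nat.count_mono_left fun i hi => (h i hi).2)

/-- The record word of a direct sum is the concatenation of the two record words; only the
junction can create an extra change. -/
lemma chg_dsum {m n : ℕ} (σ : Equiv.Perm (Fin m)) (τ : Equiv.Perm (Fin n)) :
    chg σ + chg τ ≤ chg (dsum σ τ) ∧ chg (dsum σ τ) ≤ chg σ + chg τ + 1 := by
  classical
  have hL : ∀ i, i + 1 < m → (IsChg (dsum σ τ) i ↔ IsChg σ i) := fun i hi => by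
    unfold IsChg
    rw [recWord_dsum_left _ _ _ (by omega), recWord_dsum_left _ _ _ hi]
  have hR : ∀ i, IsChg (dsum σ τ) (m + i) ↔ IsChg τ i := fun i => by
    unfold IsChg
    rw [add_assoc, recWord_dsum_right, recWord_dsum_right]
  have e1 : chg σ = Nat.count (IsChg (dsum σ τ)) (m - 1) := by
    unfold chg
    exact count_congr' fun i hi => (hL i (by omega)).symm
  have e2 : chg τ = Nat.count (fun k => IsChg (dsum σ τ) (m + k)) (n - 1) := by
    unfold chg
    exact count_congr' fun i hi => (hR i).symm
  have e3 : chg (dsum σ τ) = Nat.count (IsChg (dsum σ τ)) (m + n - 1) := by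
    unfold chg; congr
  rw [e1, e2, e3]
  rcases m with _ | m
  · simp
  rcases n with _ | n
  · simp
  rw [show m + 1 + (n + 1) - 1 = m + 1 + n by omega, Nat.count_add, Nat.count_succ]
  simp only [Nat.add_sub_cancel]
  split_ifs <;> omega

lemma cnt_mono {n : ℕ} {p q : ℕ → Prop} (h : ∀ a, p a → q a) : cnt n p ≤ cnt n q :=
  Set.ncard_le_ncard (fun _ hσ => ⟨hσ.1, h _ hσ.2⟩) (Set.toFinite _)

lemma cnt_mul_le {m n : ℕ} {p q r : ℕ → Prop}
    (h : ∀ a b d, p a → q b → a + b ≤ d → d ≤ a + b + 1 → r d) :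
    cnt m p * cnt n q ≤ cnt (m + n) r := by
  unfold cnt
  rw [← Set.ncard_prod]
  refine Set.ncard_le_ncard_of_injOn (fun x => dsum x.1 x.2) ?_ ?_ (Set.toFinite _)
  · rintro ⟨σ, τ⟩ ⟨hσ, hτ⟩
    exact ⟨avoids321_dsum hσ.1 hτ.1, h _ _ _ hσ.2 hτ.2 (chg_dsum σ τ).1 (chg_dsum σ τ).2⟩
  · rintro ⟨σ, τ⟩ - ⟨σ', τ'⟩ - e
    obtain ⟨rfl, rfl⟩ := dsum_inj e
    rfl

/-! ### The exponential moment bound -/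

open scoped Classical in
/-- The set of positions at which the record word of `σ` changes. -/
noncomputable def chgSet {n : ℕ} (σ : Equiv.Perm (Fin n)) : Finset ℕ :=
  (Finset.range (n - 1)).filter (IsChg σ)

lemma card_chgSet {n : ℕ} (σ : Equiv.Perm (Fin n)) : (chgSet σ).card = chg σ := by
  unfold chg chgSet
  rw [Nat.count_eq_card_filter_range]

open scoped Classical in
/-- The set of values of the records of `σ`. -/
noncomputable def recVals {n : ℕ} (σ : Equiv.Perm (Fin n)) : Finset (Fin n) :=
  Finset.univ.filter fun v => IsRec σ (σ.symm v)

/-- A `321`-avoiding permutation is encoded by the change set of its record word together with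
the set of its record values. -/
lemma eq_of_chgSet {n : ℕ} {σ τ : Equiv.Perm (Fin n)} (hσ : Avoids321 σ) (hτ : Avoids321 τ)
    (h1 : chgSet σ = chgSet τ) (h2 : recVals σ = recVals τ) : σ = τ := by
  classical
  refine eq_of_rec (Or.inl ⟨hσ, hτ⟩) (fun i => ?_) (fun v => ?_)
  · rw [← recWord_val, ← recWord_val, recWord_iff_even σ _ i.2, recWord_iff_even τ _ i.2,
      count_congr' (q := IsChg τ)]
    intro j hj
    have := congrArg (j ∈ ·) h1
    simpa [chgSet, show j < n - 1 by omega] using this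
  · have := congrArg (v ∈ ·) h2
    simpa [recVals] using this

open scoped Classical in
lemma sum_pow_chg_le (n : ℕ) (t : ℝ) (ht : 0 < t) :
    ∑ σ ∈ Finset.univ.filter (fun σ : Equiv.Perm (Fin n) => Avoids321 σ), t ^ chg σ
      ≤ (2 * (1 + t)) ^ n := by
  calc _ = ∑ x ∈ (Finset.univ.filter (fun σ : Equiv.Perm (Fin n) => Avoids321 σ)).image
        (fun σ => (chgSet σ, recVals σ)), t ^ x.1.card := by
        rw [Finset.sum_image]
        · simp only [card_chgSet]
        · intro σ hσ τ hτ e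
          simp only [Prod.mk.injEq] at e
          exact eq_of_chgSet (by simpa using hσ) (by simpa using hτ) e.1 e.2
    _ ≤ ∑ x ∈ (Finset.range n).powerset ×ˢ (Finset.univ : Finset (Finset (Fin n))),
        t ^ x.1.card := by
        refine Finset.sum_le_sum_of_subset_of_nonneg ?_ fun _ _ _ => by positivity
        intro x hx
        obtain ⟨σ, -, rfl⟩ := Finset.mem_image.1 hx
        simp only [Finset.mem_product, Finset.mem_powerset, Finset.mem_univ, and_true]
        refine (Finset.filter_subset _ _).trans fun i hi => ?_
        simp only [Finset.mem_range] at hi ⊢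
        omega
    _ = (2 * (1 + t)) ^ n := by
        rw [Finset.sum_product]
        simp only [Finset.sum_const, Finset.card_univ, Fintype.card_finset, Fintype.card_fin,
          nsmul_eq_mul]
        rw [← Finset.mul_sum]
        have := Finset.sum_pow_mul_eq_add_pow t 1 (Finset.range n)
        simp only [one_pow, mul_one, Finset.card_range] at this
        rw [this, mul_pow, add_comm t 1]
        norm_num

/-- The Chernoff bound: `w` is a lower bound for `t ^ chg σ` on the event `p`. -/
lemma cnt_mul_le_pow (n : ℕ) (p : ℕ → Prop) (t w : ℝ) (ht : 0 < t)
    (hw : ∀ c, p c → w ≤ t ^ c) : cnt n p * w ≤ (2 * (1 + t)) ^ n := by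
  classical
  refine le_trans ?_ (sum_pow_chg_le n t ht)
  have e : cnt n p = (Finset.univ.filter
      (fun σ : Equiv.Perm (Fin n) => Avoids321 σ ∧ p (chg σ))).card := by
    unfold cnt
    rw [Set.ncard_eq_toFinset_card']
    congr 1
    ext σ
    simp
  rw [e, ← nsmul_eq_mul]
  refine (Finset.card_nsmul_le_sum _ (fun σ => t ^ chg σ) w fun σ hσ => ?_).trans ?_
  · exact hw _ (by simpa using (Finset.mem_filter.1 hσ).2.2)
  · refine Finset.sum_le_sum_of_subset_of_nonneg (fun σ hσ => ?_) fun _ _ _ => by positivity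
    simp only [Finset.mem_filter, Finset.mem_univ, true_and] at hσ ⊢
    exact hσ.1

lemma cnt_le_pow (n : ℕ) (p : ℕ → Prop) : (cnt n p : ℝ) ≤ 4 ^ n := by
  have := cnt_mul_le_pow n p 1 1 one_pos (by simp)
  norm_num at this
  exact this

/-! ### Shuffles of two increasing sequences -/

lemma card_compl_of_card {m : ℕ} {V : Finset (Fin (m + m))} (hV : V.card = m) :
    Vᶜ.card = m := by
  rw [Finset.card_compl, hV, Fintype.card_fin]; omega

/-- The permutation that writes `V` increasingly into the positions `e (inl _)` and the
complement of `V` increasingly into the positions `e (inr _)`. -/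
def shuffle {m : ℕ} (e : Fin m ⊕ Fin m ≃ Fin (m + m)) (V : Finset (Fin (m + m)))
    (hV : V.card = m) : Equiv.Perm (Fin (m + m)) :=
  e.symm.trans (finSumEquivOfFinset hV (card_compl_of_card hV))

section
variable {m : ℕ} (e : Fin m ⊕ Fin m ≃ Fin (m + m)) (V : Finset (Fin (m + m))) (hV : V.card = m)

lemma shuffle_inl (i : Fin m) : shuffle e V hV (e (Sum.inl i)) = V.orderEmbOfFin hV i := by
  simp [shuffle]

lemma shuffle_inr (i : Fin m) :
    shuffle e V hV (e (Sum.inr i)) = Vᶜ.orderEmbOfFin (card_compl_of_card hV) i := by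
  simp [shuffle]

lemma shuffle_lt (h1 : StrictMono (fun i => e (Sum.inl i)))
    (h2 : StrictMono (fun i => e (Sum.inr i))) (i j : Fin (m + m)) (hij : i < j)
    (h : (e.symm i).isLeft = (e.symm j).isLeft) : shuffle e V hV i < shuffle e V hV j := by
  obtain ⟨i, rfl⟩ := e.surjective i
  obtain ⟨j, rfl⟩ := e.surjective j
  simp only [Equiv.symm_apply_apply] at h
  rcases i with i | i <;> rcases j with j | j
  · rw [shuffle_inl, shuffle_inl]
    exact (V.orderEmbOfFin hV).strictMono (h1.lt_iff_lt.1 hij)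
  · simp at h
  · simp at h
  · rw [shuffle_inr, shuffle_inr]
    exact (Vᶜ.orderEmbOfFin _).strictMono (h2.lt_iff_lt.1 hij)

lemma avoids321_shuffle (h1 : StrictMono (fun i => e (Sum.inl i)))
    (h2 : StrictMono (fun i => e (Sum.inr i))) : Avoids321 (shuffle e V hV) := by
  rintro ⟨i, j, k, hij, hjk, hkj, hji⟩
  have a := shuffle_lt e V hV h1 h2 i j hij
  have b := shuffle_lt e V hV h1 h2 j k hjk
  have c := shuffle_lt e V hV h1 h2 i k (hij.trans hjk)
  have a' := fun h => lt_asymm (a h) hji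
  have b' := fun h => lt_asymm (b h) hkj
  have c' := fun h => lt_asymm (c h) (hkj.trans hji)
  revert a' b' c'
  cases (e.symm i).isLeft <;> cases (e.symm j).isLeft <;> cases (e.symm k).isLeft <;> simp

lemma shuffle_inj {W : Finset (Fin (m + m))} {hW : W.card = m}
    (h : shuffle e V hV = shuffle e W hW) : V = W := by
  rw [← Finset.coe_inj, ← Finset.range_orderEmbOfFin V hV, ← Finset.range_orderEmbOfFin W hW]
  congr 1
  funext i
  rw [← shuffle_inl e V hV, ← shuffle_inl e W hW, h]

lemma card_le_cnt (h1 : StrictMono (fun i => e (Sum.inl i)))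
    (h2 : StrictMono (fun i => e (Sum.inr i))) (p : ℕ → Prop)
    (F : Finset (Finset (Fin (m + m)))) (hF : ∀ V ∈ F, V.card = m)
    (hp : ∀ V ∈ F, ∀ hV : V.card = m, p (chg (shuffle e V hV))) : F.card ≤ cnt (m + m) p := by
  classical
  unfold cnt
  rw [← Set.ncard_coe_finset]
  refine Set.ncard_le_ncard_of_injOn
    (fun V => if hV : V.card = m then shuffle e V hV else 1) (fun V hV => ?_) ?_ (Set.toFinite _)
  · simp only [hF V hV, dif_pos]
    exact ⟨avoids321_shuffle e V _ h1 h2, hp V hV _⟩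
  · intro V hV W hW h
    simp only [hF V hV, hF W hW, dif_pos] at h
    exact shuffle_inj e V _ h

end

/-- If all of the first half are records and no non-record directly follows a record in the second
half, then the word changes at most at `m - 1` and at one later position. -/
lemma chg_le_two {m : ℕ} (σ : Equiv.Perm (Fin (m + m))) (h1 : ∀ i < m, RecWord σ i)
    (h2 : ∀ i ≥ m, i + 1 < m + m → RecWord σ i → RecWord σ (i + 1)) : chg σ ≤ 2 := by
  classical
  rw [← card_chgSet]
  have key : ((chgSet σ).erase (m - 1)).card ≤ 1 := by
    have aux : ∀ a ∈ (chgSet σ).erase (m - 1), ∀ b ∈ (chgSet σ).erase (m - 1), ¬ a < b := by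
      intro a ha b hb hab
      simp only [chgSet, Finset.mem_erase, Finset.mem_filter, Finset.mem_range] at ha hb
      obtain ⟨ha1, ha2, ha3⟩ := ha
      obtain ⟨hb1, hb2, hb3⟩ := hb
      unfold IsChg at ha3 hb3
      have ham : m ≤ a := by
        by_contra hlt
        have := h1 a (by omega)
        have := h1 (a + 1) (by omega)
        tauto
      have hra : RecWord σ (a + 1) := by
        have := h2 a ham (by omega)
        tauto
      have : ∀ c, a + 1 ≤ c → c < m + m → RecWord σ c := by
        intro c hc
        induction c, hc using Nat.le_induction with
        | base => exact fun _ => hra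
        | succ c hc ih => exact fun h => h2 c (by omega) h (ih (by omega))
      have := this b hab (by omega)
      have := this |> h2 b (by omega) (by omega)
      tauto
    refine Finset.card_le_one.2 fun a ha b hb => ?_
    exact le_antisymm (not_lt.1 (aux b hb a ha)) (not_lt.1 (aux a ha b hb))
  have := Finset.pred_card_le_card_erase (s := chgSet σ) (a := m - 1)
  omega

/-- Grassmannian permutations: many `321`-avoiders with a bounded number of changes. -/
lemma centralBinom_le_cnt (m : ℕ) : m.centralBinom ≤ cnt (m + m) (fun c => c ≤ 2) := by
  have h1 : StrictMono (fun i : Fin m => finSumFinEquiv (m := m) (n := m) (Sum.inl i)) := by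
    intro i j h
    simpa only [finSumFinEquiv_apply_left, Fin.lt_def, Fin.val_castAdd] using h
  have h2 : StrictMono (fun i : Fin m => finSumFinEquiv (m := m) (n := m) (Sum.inr i)) := by
    intro i j h
    simpa only [finSumFinEquiv_apply_right, Fin.natAdd_lt_natAdd_iff] using h
  have := card_le_cnt finSumFinEquiv h1 h2 (fun c => c ≤ 2)
    (Finset.powersetCard m Finset.univ) (fun V hV => (Finset.mem_powersetCard.1 hV).2)
    (fun V _ hV => ?_)
  · rw [Finset.card_powersetCard, Finset.card_univ, Fintype.card_fin] at this
    rwa [Nat.centralBinom_eq_two_mul_choose, two_mul]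
  · have hl : ∀ i : Fin (m + m), (finSumFinEquiv.symm i).isLeft = decide ((i : ℕ) < m) := by
      intro i
      induction i using Fin.addCases with
      | left i => simp
      | right i => rw [finSumFinEquiv_symm_apply_natAdd]; simp
    refine chg_le_two _ (fun i hi => ⟨by omega, fun j hj => ?_⟩) ?_
    · refine shuffle_lt _ V hV h1 h2 _ _ hj ?_
      have hj' : (j : ℕ) < i := hj
      rw [hl, hl]
      simp [hi, show (j : ℕ) < m by omega]
    · rintro i hi hi1 ⟨h, hr⟩
      refine ⟨hi1, fun j hj => ?_⟩
      have hlt : shuffle finSumFinEquiv V hV ⟨i, h⟩ < shuffle finSumFinEquiv V hV ⟨i + 1, hi1⟩ := by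
        refine shuffle_lt _ V hV h1 h2 _ _ (by simp [Fin.lt_def]) ?_
        rw [hl, hl]
        simp [show ¬ i < m by omega, show ¬ i + 1 < m by omega]
      have hj' : (j : ℕ) < i + 1 := hj
      rcases (show (j : ℕ) < i ∨ (j : ℕ) = i by omega) with h3 | h3
      · exact (hr j h3).trans hlt
      · have : j = ⟨i, h⟩ := Fin.ext h3
        rwa [this]

/-- Even positions on the left, odd positions on the right. -/
noncomputable def evenOdd (m : ℕ) : Fin m ⊕ Fin m ≃ Fin (m + m) :=
  Equiv.ofBijective
    (Sum.elim (fun i => ⟨2 * i, by omega⟩) (fun i => ⟨2 * i + 1, by omega⟩))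
    ((Fintype.bijective_iff_injective_and_card _).2 ⟨by
      rintro (i | i) (j | j) h <;>
        simp only [Sum.elim_inl, Sum.elim_inr, Sum.inl.injEq, Sum.inr.injEq,
          Fin.ext_iff] at h ⊢ <;> omega, by simp⟩)

lemma evenOdd_inl {m : ℕ} (i : Fin m) : (evenOdd m (Sum.inl i) : ℕ) = 2 * i := rfl

lemma evenOdd_inr {m : ℕ} (i : Fin m) : (evenOdd m (Sum.inr i) : ℕ) = 2 * i + 1 := rfl

/-- If the `i`-th element of `V` exceeds the `i`-th element of its complement for all `i`, then
the records of the even-odd shuffle are exactly the even positions. -/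
lemma chg_shuffle_evenOdd {m : ℕ} (V : Finset (Fin (m + m))) (hV : V.card = m)
    (h : ∀ i, Vᶜ.orderEmbOfFin (card_compl_of_card hV) i < V.orderEmbOfFin hV i) :
    chg (shuffle (evenOdd m) V hV) = m + m - 1 := by
  classical
  have hrec : ∀ x : Fin (m + m), RecWord (shuffle (evenOdd m) V hV) x ↔ Even (x : ℕ) := by
    intro x
    rw [recWord_val]
    obtain ⟨x, rfl⟩ := (evenOdd m).surjective x
    rcases x with i | i
    · rw [evenOdd_inl]
      simp only [even_two, Even.mul_right, iff_true]
      intro y hy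
      obtain ⟨y, rfl⟩ := (evenOdd m).surjective y
      rcases y with j | j
      · rw [Fin.lt_def, evenOdd_inl, evenOdd_inl] at hy
        rw [shuffle_inl, shuffle_inl]
        exact (V.orderEmbOfFin hV).strictMono (Fin.lt_def.2 (by omega))
      · rw [Fin.lt_def, evenOdd_inl, evenOdd_inr] at hy
        rw [shuffle_inl, shuffle_inr]
        exact (h j).trans ((V.orderEmbOfFin hV).strictMono (Fin.lt_def.2 (by omega)))
    · rw [evenOdd_inr]
      have : ¬ Even (2 * (i : ℕ) + 1) := by simp
      simp only [this, iff_false]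
      intro hr
      have h1 := hr (evenOdd m (Sum.inl i))
        (by rw [Fin.lt_def, evenOdd_inl, evenOdd_inr]; omega)
      rw [shuffle_inl, shuffle_inr] at h1
      exact lt_asymm h1 (h i)
  have hc : chg (shuffle (evenOdd m) V hV) =
      Nat.count (IsChg (shuffle (evenOdd m) V hV)) (m + m - 1) := by unfold chg; congr
  rw [hc, Nat.count_iff_forall]
  intro i hi
  unfold IsChg
  rw [hrec ⟨i, by omega⟩, hrec ⟨i + 1, by omega⟩]
  simp only [Nat.even_add_one]
  tauto

/-! ### Dyck words and alternating record words -/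

lemma card_filter_take {α : Type*} [DecidableEq α] (l : List α) (a : α) (n : ℕ) :
    ((Finset.range n).filter (fun i => l[i]? = some a)).card = (l.take n).count a := by
  induction n with
  | zero => simp
  | succ n ih =>
    rw [Finset.range_add_one, Finset.filter_insert, List.take_add_one, List.count_append, ← ih]
    split_ifs with h
    · rw [Finset.card_insert_of_notMem (by simp), h]
      simp
    · rcases h' : l[n]? with _ | b
      · simp
      · have : b ≠ a := fun e => h (by rw [h', e])
        simp [this]

/-- The positions of the down-steps of a Dyck word. -/
def downSet (m : ℕ) (p : DyckWord) : Finset (Fin (m + m)) :=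
  Finset.univ.filter fun x => p.toList[(x : ℕ)]? = some DyckStep.D

lemma length_of_semilength {m : ℕ} {p : DyckWord} (hp : p.semilength = m) :
    p.toList.length = m + m := by
  rw [← p.two_mul_semilength_eq_length, hp, two_mul]

lemma card_downSet {m : ℕ} {p : DyckWord} (hp : p.semilength = m) : (downSet m p).card = m := by
  have h : (downSet m p).map Fin.valEmbedding =
      (Finset.range (m + m)).filter (fun i => p.toList[i]? = some DyckStep.D) := by
    ext i
    simp only [downSet, Finset.mem_map, Finset.mem_filter, Finset.mem_univ, true_and,
      Fin.valEmbedding_apply, Finset.mem_range]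
    constructor
    · rintro ⟨x, hx, rfl⟩
      exact ⟨x.2, hx⟩
    · rintro ⟨h1, h2⟩
      exact ⟨⟨i, h1⟩, h2, rfl⟩
  rw [← Finset.card_map Fin.valEmbedding, h, card_filter_take, ← length_of_semilength hp,
    List.take_length, ← DyckWord.semilength_eq_count_D, hp]

lemma mem_downSet {m : ℕ} {p : DyckWord} (x : Fin (m + m)) :
    x ∈ downSet m p ↔ p.toList[(x : ℕ)]? = some DyckStep.D := by
  simp [downSet]

lemma notMem_downSet {m : ℕ} {p : DyckWord} (hp : p.semilength = m) (x : Fin (m + m)) :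
    x ∉ downSet m p ↔ p.toList[(x : ℕ)]? = some DyckStep.U := by
  rw [mem_downSet, List.getElem?_eq_getElem (by rw [length_of_semilength hp]; exact x.2)]
  rcases (p.toList[(x : ℕ)]'(by rw [length_of_semilength hp]; exact x.2)).dichotomy with h | h <;>
    simp [h]

lemma downSet_inj {m : ℕ} {p q : DyckWord} (hp : p.semilength = m) (hq : q.semilength = m)
    (h : downSet m p = downSet m q) : p = q := by
  refine DyckWord.ext (List.ext_getElem? fun i => ?_)
  by_cases hi : i < m + m
  · by_cases hm : (⟨i, hi⟩ : Fin (m + m)) ∈ downSet m p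
    · exact ((mem_downSet _).1 hm).trans ((mem_downSet ⟨i, hi⟩).1 (h ▸ hm)).symm
    · exact ((notMem_downSet hp _).1 hm).trans ((notMem_downSet hq ⟨i, hi⟩).1 (h ▸ hm)).symm
  · rw [List.getElem?_eq_none (by rw [length_of_semilength hp]; omega),
      List.getElem?_eq_none (by rw [length_of_semilength hq]; omega)]

/-- In a Dyck word the `i`-th up-step precedes the `i`-th down-step. -/
lemma downSet_ballot {m : ℕ} {p : DyckWord} (hp : p.semilength = m)
    (hV : (downSet m p).card = m) (i : Fin m) :
    (downSet m p)ᶜ.orderEmbOfFin (card_compl_of_card hV) i < (downSet m p).orderEmbOfFin hV i := by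
  classical
  by_contra! hcon
  set v := (downSet m p).orderEmbOfFin hV i with hv
  have hvm : v ∈ downSet m p := Finset.orderEmbOfFin_mem _ _ _
  have hlt : v < (downSet m p)ᶜ.orderEmbOfFin (card_compl_of_card hV) i := by
    refine lt_of_le_of_ne hcon fun e => ?_
    have := Finset.orderEmbOfFin_mem _ (card_compl_of_card hV) i
    rw [← e, Finset.mem_compl] at this
    exact this hvm
  have hD : (i : ℕ) + 1 ≤ (p.toList.take (v + 1)).count DyckStep.D := by
    rw [← card_filter_take, ← Fin.card_Iic]
    refine Finset.card_le_card_of_injOn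
      (fun a => ((downSet m p).orderEmbOfFin hV a : ℕ)) (fun a ha => ?_) ?_
    · have h1 : (downSet m p).orderEmbOfFin hV a ≤ v :=
        ((downSet m p).orderEmbOfFin hV).monotone (by simpa using ha)
      simp only [Finset.coe_filter, Finset.mem_range, Set.mem_ofPred_eq]
      exact ⟨Nat.lt_succ_of_le h1, (mem_downSet _).1 (Finset.orderEmbOfFin_mem _ _ _)⟩
    · intro a _ b _ hab
      exact ((downSet m p).orderEmbOfFin hV).injective (Fin.ext hab)
  have hU : (p.toList.take (v + 1)).count DyckStep.U ≤ i := by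
    rw [← card_filter_take]
    refine le_trans (Finset.card_le_card_of_surjOn (s := Finset.Iio i)
      (fun a => ((downSet m p)ᶜ.orderEmbOfFin (card_compl_of_card hV) a : ℕ)) ?_)
      (Fin.card_Iio i).le
    intro x hx
    simp only [Finset.coe_filter, Finset.mem_range, Set.mem_ofPred_eq] at hx
    have hxm : x < m + m := by have := v.2; omega
    have hx2 := (notMem_downSet hp ⟨x, hxm⟩).2 hx.2
    rw [← Finset.mem_compl, ← Finset.mem_coe,
      ← Finset.range_orderEmbOfFin _ (card_compl_of_card hV)] at hx2
    obtain ⟨a, ha⟩ := hx2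
    refine ⟨a, ?_, by simp only [ha]⟩
    simp only [Finset.coe_Iio, Set.mem_Iio]
    refine ((downSet m p)ᶜ.orderEmbOfFin (card_compl_of_card hV)).lt_iff_lt.1 ?_
    rw [ha]
    exact lt_of_le_of_lt (Fin.le_def.2 (by simp only []; omega)) hlt
  have := p.count_D_le_count_U (v + 1)
  omega

/-- Even-odd shuffles: many `321`-avoiders with the maximal number of changes. -/
lemma catalan_le_cnt (m : ℕ) : catalan m ≤ cnt (m + m) (fun c => m + m ≤ c + 1) := by
  classical
  have h := card_le_cnt (evenOdd m)
    (fun i j h => Fin.lt_def.2 (by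
      have : (i : ℕ) < j := h
      simp only [evenOdd_inl]; omega))
    (fun i j h => Fin.lt_def.2 (by
      have : (i : ℕ) < j := h
      simp only [evenOdd_inr]; omega))
    (fun c => m + m ≤ c + 1)
    ((Finset.univ : Finset {p : DyckWord // p.semilength = m}).image
      (fun p => downSet m p.1))
    (fun V hV => ?_) (fun V hV hV' => ?_)
  · rw [Finset.card_image_of_injective, Finset.card_univ,
      DyckWord.card_dyckWord_semilength_eq_catalan] at h
    · exact h
    · exact fun p q e => Subtype.ext (downSet_inj p.2 q.2 e)
  · obtain ⟨p, -, rfl⟩ := Finset.mem_image.1 hV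
    exact card_downSet p.2
  · obtain ⟨p, -, rfl⟩ := Finset.mem_image.1 hV
    rw [chg_shuffle_evenOdd _ hV' (downSet_ballot p.2 hV')]
    omega

/-! ### Supermultiplicative counts -/

/-- A form of Fekete's lemma for a supermultiplicative sequence `b` of naturals which may vanish
initially, and for a sequence `a` squeezed between `b` and a shift of `b`. -/
lemma fekete (a b : ℕ → ℕ) (N s : ℕ) (hb : ∀ m n, b m * b n ≤ b (m + n))
    (hpos : ∀ n ≥ N, 0 < b n) (hle : ∀ n, (b n : ℝ) ≤ 4 ^ n)
    (h1 : ∀ n, b n ≤ a n) (h2 : ∀ n, a n ≤ b (n + s)) :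
    ∃ ℓ : ℝ, Tendsto (fun n : ℕ => (1 / (n : ℝ)) * Real.log (a n)) atTop (nhds ℓ) ∧
      ∀ n ≥ 1, 0 < b n → Real.log (b n) ≤ n * ℓ := by
  set S : Set ℝ := {x | ∃ n : ℕ, 1 ≤ n ∧ 0 < b n ∧ x = Real.log (b n) / n} with hS
  have hbdd : BddAbove S := by
    refine ⟨Real.log 4, ?_⟩
    rintro x ⟨n, hn, hbn, rfl⟩
    have hn' : (0 : ℝ) < n := by exact_mod_cast hn
    rw [div_le_iff₀ hn']
    calc Real.log (b n) ≤ Real.log (4 ^ n) := Real.log_le_log (by exact_mod_cast hbn) (hle n)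
      _ = Real.log 4 * n := by rw [Real.log_pow]; ring
  have hne : S.Nonempty := ⟨_, N + 1, by omega, hpos _ (by omega), rfl⟩
  have hup : ∀ n ≥ 1, 0 < b n → Real.log (b n) ≤ n * sSup S := by
    intro n hn hbn
    have hn' : (0 : ℝ) < n := by exact_mod_cast hn
    have : Real.log (b n) / n ≤ sSup S := le_csSup hbdd ⟨n, hn, hbn, rfl⟩
    rw [div_le_iff₀ hn'] at this
    linarith
  refine ⟨sSup S, tendsto_order.2 ⟨fun y hy => ?_, fun y hy => ?_⟩, hup⟩
  · obtain ⟨v, ⟨k, hk, hbk, hv⟩, hyv⟩ := exists_lt_of_lt_csSup hne hy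
    have hk' : (0 : ℝ) < k := by exact_mod_cast hk
    have hv0 : 0 ≤ v := by
      rw [hv]
      exact div_nonneg (Real.log_nonneg (by exact_mod_cast hbk)) hk'.le
    have hpow : ∀ q : ℕ, ∀ r : ℕ, b k ^ q * b r ≤ b (q * k + r) := by
      intro q r
      induction q with
      | zero => simp
      | succ q ih =>
        calc b k ^ (q + 1) * b r = b k * (b k ^ q * b r) := by ring
          _ ≤ b k * b (q * k + r) := Nat.mul_le_mul_left _ ih
          _ ≤ b (k + (q * k + r)) := hb _ _
          _ = b ((q + 1) * k + r) := by congr 1; ring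
    have hlow : ∀ n : ℕ, N + 1 ≤ n →
        v - v * (N + k) / n ≤ (1 / (n : ℝ)) * Real.log (a n) := by
      intro n hn
      have hn' : (0 : ℝ) < n := by exact_mod_cast (by omega : 0 < n)
      -- division with a remainder that is at least `N`, where `b` is positive
      set q := (n - N) / k with hq
      have hdiv : q * k ≤ n - N := Nat.div_mul_le_self _ _
      have hdiv2 : n - N < q * k + k := by
        have := Nat.lt_div_mul_add (a := n - N) (b := k) hk
        exact this
      have hr := hpow q (n - q * k)
      rw [show q * k + (n - q * k) = n by omega] at hr
      have hr2 : b k ^ q ≤ a n :=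
        (Nat.le_mul_of_pos_right _ (hpos _ (by omega))).trans (hr.trans (h1 n))
      have hlog : q * Real.log (b k) ≤ Real.log (a n) := by
        rw [← Real.log_pow]
        refine Real.log_le_log (by positivity) ?_
        exact_mod_cast hr2
      have hbkv : Real.log (b k) = v * k := by rw [hv]; field_simp
      have hd : (n : ℝ) ≤ q * k + k + N := by
        exact_mod_cast (by omega : n ≤ q * k + k + N)
      rw [hbkv] at hlog
      have : v * (n - (N + k)) ≤ Real.log (a n) := by nlinarith
      rw [one_div, ← div_eq_inv_mul, le_div_iff₀ hn']
      calc _ = v * (n - (N + k)) := by field_simp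
        _ ≤ _ := this
    have hlim : Tendsto (fun n : ℕ => v - v * (N + k) / (n : ℝ)) atTop (nhds (v - 0)) :=
      tendsto_const_nhds.sub (tendsto_const_div_atTop_nhds_zero_nat _)
    rw [sub_zero] at hlim
    filter_upwards [hlim.eventually (lt_mem_nhds hyv), eventually_ge_atTop (N + 1)] with n hn hn2
    exact hn.trans_le (hlow n hn2)
  · have hlim : Tendsto (fun n : ℕ => sSup S + (s * sSup S) / (n : ℝ)) atTop
        (nhds (sSup S + 0)) :=
      tendsto_const_nhds.add (tendsto_const_div_atTop_nhds_zero_nat _)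
    rw [add_zero] at hlim
    filter_upwards [hlim.eventually (gt_mem_nhds hy), eventually_ge_atTop (N + 1)] with n hn hn2
    refine lt_of_le_of_lt ?_ hn
    have hn' : (0 : ℝ) < n := by exact_mod_cast (by omega : 0 < n)
    have hb' := hup (n + s) (by omega) (hpos _ (by omega))
    have ha : Real.log (a n) ≤ Real.log (b (n + s)) := by
      refine Real.log_le_log ?_ (by exact_mod_cast h2 n)
      exact_mod_cast (hpos n (by omega)).trans_le (h1 n)
    rw [one_div, ← div_eq_inv_mul, div_le_iff₀ hn']
    push_cast at hb'
    calc _ ≤ (n + s) * sSup S := ha.trans hb'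
      _ = _ := by field_simp

lemma limit_le {a : ℕ → ℕ} {ℓ κ β : ℝ}
    (h : Tendsto (fun n : ℕ => (1 / (n : ℝ)) * Real.log (a n)) atTop (nhds ℓ))
    (ha : ∀ᶠ n : ℕ in atTop, Real.log (a n) ≤ n * κ + β) : ℓ ≤ κ := by
  have hlim : Tendsto (fun n : ℕ => κ + β / (n : ℝ)) atTop (nhds (κ + 0)) :=
    tendsto_const_nhds.add (tendsto_const_div_atTop_nhds_zero_nat _)
  rw [add_zero] at hlim
  refine le_of_tendsto_of_tendsto h hlim ?_
  filter_upwards [ha, eventually_ge_atTop 1] with n hn hn2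
  have hn' : (0 : ℝ) < n := by exact_mod_cast hn2
  rw [one_div, ← div_eq_inv_mul, div_le_iff₀ hn']
  calc _ ≤ _ := hn
    _ = _ := by field_simp

/-- A growth rate `ℓ` that dominates a sequence of size `4 ^ m` up to a polynomial factor at the
indices `m + m` is at least `log 2`. -/
lemma log_two_le {b : ℕ → ℕ} {ℓ : ℝ} (h : ∀ n ≥ 1, 0 < b n → Real.log (b n) ≤ n * ℓ)
    (hb : ∀ᶠ m : ℕ in atTop, 4 ^ m ≤ m ^ 3 * b (m + m)) : Real.log 2 ≤ ℓ := by
  have hlim0 : Tendsto (fun m : ℕ => Real.log (m : ℝ) / (m : ℝ)) atTop (nhds 0) := by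
    have := Real.isLittleO_log_id_atTop.tendsto_div_nhds_zero
    exact this.comp tendsto_natCast_atTop_atTop
  have hlim : Tendsto (fun m : ℕ => Real.log 2 - 3 / 2 * (Real.log (m : ℝ) / (m : ℝ))) atTop
      (nhds (Real.log 2 - 3 / 2 * 0)) :=
    tendsto_const_nhds.sub (hlim0.const_mul _)
  rw [mul_zero, sub_zero] at hlim
  refine le_of_tendsto hlim ?_
  filter_upwards [hb, eventually_ge_atTop 1] with m hm hm1
  have hm' : (0 : ℝ) < m := by exact_mod_cast hm1
  have hbm : 0 < b (m + m) := by
    rcases Nat.eq_zero_or_pos (b (m + m)) with h0 | h0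
    · rw [h0, mul_zero] at hm
      have : 0 < 4 ^ m := by positivity
      omega
    · exact h0
  have hbm' : (0 : ℝ) < b (m + m) := by exact_mod_cast hbm
  have h1 := h (m + m) (by omega) hbm
  have h2 : Real.log ((4 : ℝ) ^ m) ≤ Real.log ((m : ℝ) ^ 3 * b (m + m)) :=
    Real.log_le_log (by positivity) (by exact_mod_cast hm)
  rw [Real.log_mul (by positivity) hbm'.ne', Real.log_pow, Real.log_pow,
    show (4 : ℝ) = 2 ^ 2 by norm_num, Real.log_pow] at h2
  push_cast at h1 h2
  have h3 : 2 * m * (Real.log 2 - ℓ) ≤ 3 * Real.log m := by linarith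
  have h4 : Real.log (m : ℝ) = m * (Real.log (m : ℝ) / m) := by field_simp
  rw [h4] at h3
  nlinarith

/-! ### Growth rates for the patterns `321` and `312` -/

lemma cnt_one_pos : 0 < cnt 1 (fun c => c = 0) := by
  unfold cnt
  rw [Set.ncard_pos (Set.toFinite _)]
  refine ⟨1, ?_, ?_⟩
  · rintro ⟨i, j, k, hij, -⟩
    omega
  · simp [chg]

lemma catalan_pos (m : ℕ) : 0 < catalan m := by
  have h := succ_mul_catalan_eq_centralBinom m
  have := Nat.centralBinom_pos m
  exact Nat.pos_of_mul_pos_left (h ▸ this)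

lemma cnt_high_pos (n : ℕ) : 0 < cnt n (fun c => n ≤ c + 2) := by
  have key : ∀ m, 0 < cnt (m + m) (fun c => m + m ≤ c + 1) := fun m =>
    (catalan_pos m).trans_le (catalan_le_cnt m)
  rcases Nat.even_or_odd' n with ⟨m, rfl | rfl⟩
  · rw [two_mul]
    exact (key m).trans_le (cnt_mono fun a h => by omega)
  · rw [two_mul]
    exact (Nat.mul_pos (key m) cnt_one_pos).trans_le (cnt_mul_le fun a b d _ _ _ _ => by omega)

lemma cnt_low_pos (n : ℕ) : 0 < cnt n (fun c => c ≤ 3) := by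
  have key : ∀ m, 0 < cnt (m + m) (fun c => c ≤ 2) := fun m =>
    (Nat.centralBinom_pos m).trans_le (centralBinom_le_cnt m)
  rcases Nat.even_or_odd' n with ⟨m, rfl | rfl⟩
  · rw [two_mul]
    exact (key m).trans_le (cnt_mono fun a h => by omega)
  · rw [two_mul]
    exact (Nat.mul_pos (key m) cnt_one_pos).trans_le (cnt_mul_le fun a b d _ _ _ _ => by omega)

lemma four_pow_le_catalan {m : ℕ} (hm : 4 ≤ m) : 4 ^ m ≤ m ^ 3 * catalan m := by
  have h1 := Nat.four_pow_lt_mul_centralBinom m hm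
  rw [← succ_mul_catalan_eq_centralBinom] at h1
  calc 4 ^ m ≤ m * ((m + 1) * catalan m) := h1.le
    _ = (m * (m + 1)) * catalan m := by ring
    _ ≤ _ := Nat.mul_le_mul_right _ (by nlinarith [Nat.mul_le_mul_left (m * m) hm])

lemma four_pow_le_centralBinom {m : ℕ} (hm : 4 ≤ m) : 4 ^ m ≤ m ^ 3 * m.centralBinom :=
  (Nat.four_pow_lt_mul_centralBinom m hm).le.trans
    (Nat.mul_le_mul_right _ (Nat.le_self_pow (by norm_num) m))

/-- Both growth rates of the theorem exist for the pattern `η` and lie in an interval that shrinks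
to `log 2` as `ε` tends to `0`. -/
def Good (η : Equiv.Perm (Fin 3)) : Prop :=
  ∀ ε : ℝ, 0 < ε → ε < 1 →
    (∃ ℓ : ℝ, Tendsto (fun n : ℕ => (1 / (n : ℝ)) * Real.log
        (({σ : Equiv.Perm (Fin n) | Avoids σ η ∧
          (1 - ε) * (n : ℝ) ≤ (altLen σ : ℝ)}.ncard : ℝ))) atTop (nhds ℓ) ∧
      Real.log 2 ≤ ℓ ∧ ℓ ≤ Real.log 2 + Real.log (1 + ε) - ε * Real.log ε) ∧
    (∃ ℓ : ℝ, Tendsto (fun n : ℕ => (1 / (n : ℝ)) * Real.log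
        (({σ : Equiv.Perm (Fin n) | Avoids σ η ∧
          (altLen σ : ℝ) ≤ ε * (n : ℝ)}.ncard : ℝ))) atTop (nhds ℓ) ∧
      Real.log 2 ≤ ℓ ∧ ℓ ≤ Real.log 2 + Real.log (1 + ε) - ε * Real.log ε)

/-- The Chernoff estimate `cnt_mul_le_pow` in logarithmic form, with `w = t ^ u`. -/
lemma log_cnt_le (n : ℕ) (p : ℕ → Prop) (t u : ℝ) (ht : 0 < t) (hpos : 0 < cnt n p)
    (hw : ∀ c : ℕ, p c → t ^ u ≤ t ^ (c : ℝ)) :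
    Real.log (cnt n p) ≤ n * (Real.log 2 + Real.log (1 + t)) - u * Real.log t := by
  have h := cnt_mul_le_pow n p t (t ^ u) ht (fun c hc => by
    rw [← Real.rpow_natCast]; exact hw c hc)
  have hpos' : (0 : ℝ) < cnt n p := by exact_mod_cast hpos
  have htu : 0 < t ^ u := Real.rpow_pos_of_pos ht u
  have h2 := Real.log_le_log (by positivity) h
  rw [Real.log_mul hpos'.ne' htu.ne', Real.log_pow, Real.log_rpow ht,
    Real.log_mul (by norm_num) (by positivity)] at h2
  linarith

/-- If changes are distributed on the avoiders of `η` as on those of `321`, and control the longest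
alternating subsequence there, then the growth rates for `η` exist and are close to `log 2`. -/
lemma good_of (η : Equiv.Perm (Fin 3))
    (heq : ∀ (n : ℕ) (p : ℕ → Prop),
      {σ : Equiv.Perm (Fin n) | Avoids σ η ∧ p (chg σ)}.ncard = cnt n p)
    (halt : ∀ (n : ℕ) (σ : Equiv.Perm (Fin n)), Avoids σ η → altLen σ ≤ chg σ + 3) :
    Good η := by
  have hge : ∀ (n : ℕ) (p q : ℕ → Prop), (∀ c l, c ≤ l → l ≤ c + 3 → p c → q l) →
      cnt n p ≤ {σ : Equiv.Perm (Fin n) | Avoids σ η ∧ q (altLen σ)}.ncard := by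
    intro n p q h
    rw [← heq]
    refine Set.ncard_le_ncard (fun σ hσ => ⟨hσ.1, ?_⟩) (Set.toFinite _)
    exact h _ _ (chg_le_altLen σ) (halt n σ hσ.1) hσ.2
  have hle : ∀ (n : ℕ) (p q : ℕ → Prop), (∀ c l, c ≤ l → l ≤ c + 3 → q l → p c) →
      {σ : Equiv.Perm (Fin n) | Avoids σ η ∧ q (altLen σ)}.ncard ≤ cnt n p := by
    intro n p q h
    rw [← heq]
    refine Set.ncard_le_ncard (fun σ hσ => ⟨hσ.1, ?_⟩) (Set.toFinite _)
    exact h _ _ (chg_le_altLen σ) (halt n σ hσ.1) hσ.2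
  intro ε hε hε1
  obtain ⟨N, hN⟩ := exists_nat_ge (7 / ε)
  have hN' : ∀ n ≥ N, 7 ≤ ε * (n : ℝ) := by
    intro n hn
    have : (N : ℝ) ≤ n := by exact_mod_cast hn
    rw [div_le_iff₀ hε] at hN
    nlinarith
  have hc : ∀ {x y : ℕ}, x ≤ y → (x : ℝ) ≤ y := fun h => by exact_mod_cast h
  refine ⟨?_, ?_⟩
  · have hpos : ∀ n ≥ N, 0 < cnt n (fun c => (1 - ε) * (n : ℝ) ≤ (c : ℝ)) := by
      intro n hn
      refine (cnt_high_pos n).trans_le (cnt_mono fun c h => ?_)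
      have h := hc h
      have := hN' n hn
      push_cast at h
      linarith
    have hmid : ∀ n, {σ : Equiv.Perm (Fin n) | Avoids σ η ∧
        (1 - ε) * (n : ℝ) ≤ (altLen σ : ℝ)}.ncard ≤
        cnt n (fun c => (1 - ε) * (n : ℝ) - 3 ≤ (c : ℝ)) := by
      intro n
      refine hle n _ (fun l => (1 - ε) * (n : ℝ) ≤ (l : ℝ)) fun c l _ h2 h3 => ?_
      have h2 := hc h2
      push_cast at h2
      linarith
    have hlow : ∀ n, cnt n (fun c => (1 - ε) * (n : ℝ) ≤ (c : ℝ)) ≤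
        {σ : Equiv.Perm (Fin n) | Avoids σ η ∧ (1 - ε) * (n : ℝ) ≤ (altLen σ : ℝ)}.ncard := by
      intro n
      refine hge n _ (fun l => (1 - ε) * (n : ℝ) ≤ (l : ℝ)) fun c l h1 _ h3 => ?_
      exact h3.trans (hc h1)
    obtain ⟨ℓ, hℓ, hℓ2⟩ := fekete
      (fun n => {σ : Equiv.Perm (Fin n) | Avoids σ η ∧
        (1 - ε) * (n : ℝ) ≤ (altLen σ : ℝ)}.ncard)
      (fun n => cnt n (fun c => (1 - ε) * (n : ℝ) ≤ (c : ℝ))) N N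
      (fun m n => cnt_mul_le fun a b d ha hb h _ => by
        have h := hc h
        push_cast at h ⊢
        linarith)
      hpos (fun n => cnt_le_pow n _) hlow
      (fun n => by
        -- pad with a permutation of `N` letters that has almost the maximal number of changes
        refine (hmid n).trans ((Nat.le_mul_of_pos_right _ (cnt_high_pos N)).trans
          (cnt_mul_le fun a b d ha hb h _ => ?_))
        have h := hc h
        have hb := hc hb
        have := hN' N le_rfl
        push_cast at h hb ⊢
        linarith)
    refine ⟨ℓ, hℓ, log_two_le hℓ2 ?_, limit_le hℓ (β := -(3 * Real.log ε)) ?_⟩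
    · filter_upwards [eventually_ge_atTop 4, eventually_ge_atTop N] with m hm hmN
      refine (four_pow_le_catalan hm).trans (Nat.mul_le_mul_left _ ?_)
      refine (catalan_le_cnt m).trans (cnt_mono fun c h => ?_)
      have h := hc h
      have := hN' (m + m) (by omega)
      push_cast at h this ⊢
      linarith
    · filter_upwards [eventually_ge_atTop N] with n hn
      have h0 := (hpos n hn).trans_le (hlow n)
      have h1 := Real.log_le_log (by exact_mod_cast h0) (hc (hmid n))
      -- large counts are controlled by tilting with `t = 1 / ε > 1`
      have h2 := log_cnt_le n _ ε⁻¹ ((1 - ε) * n - 3) (by positivity) (h0.trans_le (hmid n))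
        (fun c h => Real.rpow_le_rpow_of_exponent_le (one_le_inv₀ hε |>.2 hε1.le) h)
      rw [show 1 + ε⁻¹ = (1 + ε) * ε⁻¹ by field_simp; ring,
        Real.log_mul (by positivity) (by positivity), Real.log_inv] at h2
      refine h1.trans (h2.trans (le_of_eq ?_))
      ring
  · have hpos : ∀ n ≥ N, 0 < cnt n (fun c => (c : ℝ) + 3 ≤ ε * (n : ℝ)) := by
      intro n hn
      refine (cnt_low_pos n).trans_le (cnt_mono fun c h => ?_)
      have h := hc h
      have := hN' n hn
      push_cast at h
      linarith
    have hmid : ∀ n, {σ : Equiv.Perm (Fin n) | Avoids σ η ∧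
        (altLen σ : ℝ) ≤ ε * (n : ℝ)}.ncard ≤ cnt n (fun c => (c : ℝ) ≤ ε * (n : ℝ)) := by
      intro n
      refine hle n _ (fun l => (l : ℝ) ≤ ε * (n : ℝ)) fun c l h1 _ h3 => ?_
      exact (hc h1).trans h3
    have hlow : ∀ n, cnt n (fun c => (c : ℝ) + 3 ≤ ε * (n : ℝ)) ≤
        {σ : Equiv.Perm (Fin n) | Avoids σ η ∧ (altLen σ : ℝ) ≤ ε * (n : ℝ)}.ncard := by
      intro n
      refine hge n _ (fun l => (l : ℝ) ≤ ε * (n : ℝ)) fun c l _ h2 h3 => ?_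
      have h2 := hc h2
      push_cast at h2
      linarith
    obtain ⟨ℓ, hℓ, hℓ2⟩ := fekete
      (fun n => {σ : Equiv.Perm (Fin n) | Avoids σ η ∧ (altLen σ : ℝ) ≤ ε * (n : ℝ)}.ncard)
      (fun n => cnt n (fun c => (c : ℝ) + 3 ≤ ε * (n : ℝ))) N N
      (fun m n => cnt_mul_le fun a b d ha hb _ h => by
        have h := hc h
        push_cast at h ⊢
        linarith)
      hpos (fun n => cnt_le_pow n _) hlow
      (fun n => by
        -- pad with a permutation of `N` letters that has few changes
        refine (hmid n).trans ((Nat.le_mul_of_pos_right _ (cnt_low_pos N)).trans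
          (cnt_mul_le fun a b d ha hb _ h => ?_))
        have h := hc h
        have hb := hc hb
        have := hN' N le_rfl
        push_cast at h hb ⊢
        linarith)
    refine ⟨ℓ, hℓ, log_two_le hℓ2 ?_, limit_le hℓ (β := 0) ?_⟩
    · filter_upwards [eventually_ge_atTop 4, eventually_ge_atTop N] with m hm hmN
      refine (four_pow_le_centralBinom hm).trans (Nat.mul_le_mul_left _ ?_)
      refine (centralBinom_le_cnt m).trans (cnt_mono fun c h => ?_)
      have h := hc h
      have := hN' (m + m) (by omega)
      push_cast at h this ⊢
      linarith
    · filter_upwards [eventually_ge_atTop N] with n hn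
      have h0 := (hpos n hn).trans_le (hlow n)
      have h1 := Real.log_le_log (by exact_mod_cast h0) (hc (hmid n))
      -- small counts are controlled by tilting with `t = ε < 1`
      have h2 := log_cnt_le n _ ε (ε * n) hε (h0.trans_le (hmid n))
        (fun c h => Real.rpow_le_rpow_of_exponent_ge hε hε1.le h)
      refine h1.trans (h2.trans (le_of_eq ?_))
      ring

/-! ### Symmetries of the pattern -/

/-- The pattern `321`. -/
def pat321 : Equiv.Perm (Fin 3) := Fin.revPerm

/-- The pattern `312`. -/
def pat312 : Equiv.Perm (Fin 3) := ⟨![2, 0, 1], ![1, 2, 0], by decide, by decide⟩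

lemma strictMono_three {n : ℕ} {i j k : Fin n} (h1 : i < j) (h2 : j < k) :
    StrictMono ![i, j, k] := by
  intro a b hab
  fin_cases a <;> fin_cases b <;> simp_all [h1.trans h2]

lemma avoids_pat321 {n : ℕ} (σ : Equiv.Perm (Fin n)) : Avoids σ pat321 ↔ Avoids321 σ := by
  refine not_congr ⟨?_, ?_⟩
  · rintro ⟨f, hf, h⟩
    exact ⟨f 0, f 1, f 2, hf (by decide), hf (by decide), (h 2 1).2 (by decide),
      (h 1 0).2 (by decide)⟩
  · rintro ⟨i, j, k, hij, hjk, h1, h2⟩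
    refine ⟨![i, j, k], strictMono_three hij hjk, fun a b => ?_⟩
    have h3 := h1.trans h2
    rw [show pat321 a < pat321 b ↔ b < a from Fin.rev_lt_rev]
    fin_cases a <;> fin_cases b <;> simp [h1, h2, h3, h1.le, h2.le, h3.le]

lemma avoids_pat312 {n : ℕ} (σ : Equiv.Perm (Fin n)) : Avoids σ pat312 ↔ Avoids312 σ := by
  refine not_congr ⟨?_, ?_⟩
  · rintro ⟨f, hf, h⟩
    exact ⟨f 0, f 1, f 2, hf (by decide), hf (by decide), (h 1 2).2 (by decide),
      (h 2 0).2 (by decide)⟩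
  · rintro ⟨i, j, k, hij, hjk, h1, h2⟩
    refine ⟨![i, j, k], strictMono_three hij hjk, fun a b => ?_⟩
    have h3 := h1.trans h2
    fin_cases a <;> fin_cases b <;>
      simp [pat312, h1, h2, h3, h1.le, h2.le, h3.le]

lemma good_pat321 : Good pat321 :=
  good_of _ (fun n p => by simp only [avoids_pat321, cnt])
    fun n σ h => altLen_le_321 ((avoids_pat321 σ).1 h)

lemma good_pat312 : Good pat312 :=
  good_of _ (fun n p => by simp only [avoids_pat312]; exact cnt_eq_312 n p)
    fun n σ h => altLen_le_312 ((avoids_pat312 σ).1 h)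

lemma contains_comp_rev {n m : ℕ} {σ : Equiv.Perm (Fin n)} {η : Equiv.Perm (Fin m)}
    (h : Contains σ η) : Contains (Fin.revPerm.trans σ) (Fin.revPerm.trans η) := by
  obtain ⟨f, hf, h⟩ := h
  refine ⟨fun j => (f j.rev).rev, fun a b hab => ?_, fun j k => ?_⟩
  · exact Fin.rev_lt_rev.2 (hf (Fin.rev_lt_rev.2 hab))
  · simpa using h j.rev k.rev

lemma contains_rev_comp {n m : ℕ} {σ : Equiv.Perm (Fin n)} {η : Equiv.Perm (Fin m)}
    (h : Contains σ η) : Contains (σ.trans Fin.revPerm) (η.trans Fin.revPerm) := by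
  obtain ⟨f, hf, h⟩ := h
  exact ⟨f, hf, fun j k => by simpa using h k j⟩

lemma comp_rev_rev {n : ℕ} (σ : Equiv.Perm (Fin n)) :
    Fin.revPerm.trans (Fin.revPerm.trans σ) = σ := by
  ext x; simp

lemma rev_rev_comp {n : ℕ} (σ : Equiv.Perm (Fin n)) :
    (σ.trans Fin.revPerm).trans Fin.revPerm = σ := by
  ext x; simp

lemma avoids_comp_rev {n m : ℕ} (σ : Equiv.Perm (Fin n)) (η : Equiv.Perm (Fin m)) :
    Avoids (Fin.revPerm.trans σ) (Fin.revPerm.trans η) ↔ Avoids σ η :=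
  not_congr ⟨fun h => by simpa only [comp_rev_rev] using contains_comp_rev h, contains_comp_rev⟩

lemma avoids_rev_comp {n m : ℕ} (σ : Equiv.Perm (Fin n)) (η : Equiv.Perm (Fin m)) :
    Avoids (σ.trans Fin.revPerm) (η.trans Fin.revPerm) ↔ Avoids σ η :=
  not_congr ⟨fun h => by simpa only [rev_rev_comp] using contains_rev_comp h, contains_rev_comp⟩

lemma isAltSub_ne {n k : ℕ} {σ : Equiv.Perm (Fin n)} {f : Fin k → Fin n} (hf : StrictMono f)
    {i j : Fin k} (h : i ≠ j) : σ (f i) ≠ σ (f j) := fun e =>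
  h (hf.injective (σ.injective e))

lemma isAltSub_rev_comp {n k : ℕ} {σ : Equiv.Perm (Fin n)} {f : Fin k → Fin n}
    (h : IsAltSub σ f) : IsAltSub (σ.trans Fin.revPerm) f := by
  refine ⟨h.1, fun j hj => ?_⟩
  have h1 := h.2 j hj
  have n1 := isAltSub_ne (σ := σ) h.1 (i := ⟨j, by omega⟩) (j := ⟨j + 1, by omega⟩) (by simp)
  have n2 := isAltSub_ne (σ := σ) h.1 (i := ⟨j + 1, by omega⟩) (j := ⟨j + 2, by omega⟩) (by simp)
  simp only [Equiv.trans_apply, Fin.revPerm_apply, Fin.rev_lt_rev, not_lt]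
  grind

lemma isAltSub_comp_rev {n k : ℕ} {σ : Equiv.Perm (Fin n)} {f : Fin k → Fin n}
    (h : IsAltSub σ f) : IsAltSub (Fin.revPerm.trans σ) (fun j => (f j.rev).rev) := by
  refine ⟨fun a b hab => Fin.rev_lt_rev.2 (h.1 (Fin.rev_lt_rev.2 hab)), fun j hj => ?_⟩
  have h1 := h.2 (k - (j + 3)) (by omega)
  have e0 : (⟨j, by omega⟩ : Fin k).rev = ⟨k - (j + 3) + 2, by omega⟩ := by
    ext; simp only [Fin.val_rev]; omega
  have e1 : (⟨j + 1, by omega⟩ : Fin k).rev = ⟨k - (j + 3) + 1, by omega⟩ := by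
    ext; simp only [Fin.val_rev]; omega
  have e2 : (⟨j + 2, by omega⟩ : Fin k).rev = ⟨k - (j + 3), by omega⟩ := by
    ext; simp only [Fin.val_rev]
  have n1 := isAltSub_ne (σ := σ) h.1 (i := ⟨k - (j + 3), by omega⟩)
    (j := ⟨k - (j + 3) + 1, by omega⟩) (by simp)
  have n2 := isAltSub_ne (σ := σ) h.1 (i := ⟨k - (j + 3) + 1, by omega⟩)
    (j := ⟨k - (j + 3) + 2, by omega⟩) (by simp)
  simp only [Equiv.trans_apply, Fin.revPerm_apply, Fin.rev_rev, e0, e1, e2, not_lt]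
  grind

lemma altLen_comp_rev {n : ℕ} (σ : Equiv.Perm (Fin n)) :
    altLen (Fin.revPerm.trans σ) = altLen σ := by
  unfold altLen
  congr 1
  ext k
  constructor
  · rintro ⟨f, hf⟩
    exact ⟨_, by simpa only [comp_rev_rev] using isAltSub_comp_rev hf⟩
  · rintro ⟨f, hf⟩
    exact ⟨_, isAltSub_comp_rev hf⟩

lemma altLen_rev_comp {n : ℕ} (σ : Equiv.Perm (Fin n)) :
    altLen (σ.trans Fin.revPerm) = altLen σ := by
  unfold altLen
  congr 1
  ext k
  constructor
  · rintro ⟨f, hf⟩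
    exact ⟨_, by simpa only [rev_rev_comp] using isAltSub_rev_comp hf⟩
  · rintro ⟨f, hf⟩
    exact ⟨_, isAltSub_rev_comp hf⟩

lemma ncard_comp_rev (η : Equiv.Perm (Fin 3)) (n : ℕ) (p : ℕ → Prop) :
    {σ : Equiv.Perm (Fin n) | Avoids σ (Fin.revPerm.trans η) ∧ p (altLen σ)}.ncard =
      {σ : Equiv.Perm (Fin n) | Avoids σ η ∧ p (altLen σ)}.ncard := by
  refine (Set.ncard_congr (fun σ _ => Fin.revPerm.trans σ) (fun σ hσ => ?_) (fun σ τ _ _ h => ?_)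
    (fun σ hσ => ⟨Fin.revPerm.trans σ, ?_, comp_rev_rev σ⟩)).symm
  · exact ⟨(avoids_comp_rev σ η).2 hσ.1, by rw [altLen_comp_rev]; exact hσ.2⟩
  · rw [← comp_rev_rev σ, h, comp_rev_rev]
  · refine ⟨?_, by rw [altLen_comp_rev]; exact hσ.2⟩
    rw [← avoids_comp_rev, comp_rev_rev]
    exact hσ.1

lemma ncard_rev_comp (η : Equiv.Perm (Fin 3)) (n : ℕ) (p : ℕ → Prop) :
    {σ : Equiv.Perm (Fin n) | Avoids σ (η.trans Fin.revPerm) ∧ p (altLen σ)}.ncard =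
      {σ : Equiv.Perm (Fin n) | Avoids σ η ∧ p (altLen σ)}.ncard := by
  refine (Set.ncard_congr (fun σ _ => σ.trans Fin.revPerm) (fun σ hσ => ?_) (fun σ τ _ _ h => ?_)
    (fun σ hσ => ⟨σ.trans Fin.revPerm, ?_, rev_rev_comp σ⟩)).symm
  · exact ⟨(avoids_rev_comp σ η).2 hσ.1, by rw [altLen_rev_comp]; exact hσ.2⟩
  · rw [← rev_rev_comp σ, h, rev_rev_comp]
  · refine ⟨?_, by rw [altLen_rev_comp]; exact hσ.2⟩
    rw [← avoids_rev_comp, rev_rev_comp]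
    exact hσ.1

lemma Good.comp_rev {η : Equiv.Perm (Fin 3)} (h : Good η) : Good (Fin.revPerm.trans η) := by
  intro ε h0 h1
  have e1 := fun n : ℕ => ncard_comp_rev η n (fun l => (1 - ε) * (n : ℝ) ≤ (l : ℝ))
  have e2 := fun n : ℕ => ncard_comp_rev η n (fun l => (l : ℝ) ≤ ε * (n : ℝ))
  simp only [e1, e2]
  exact h ε h0 h1

lemma Good.rev_comp {η : Equiv.Perm (Fin 3)} (h : Good η) : Good (η.trans Fin.revPerm) := by
  intro ε h0 h1
  have e1 := fun n : ℕ => ncard_rev_comp η n (fun l => (1 - ε) * (n : ℝ) ≤ (l : ℝ))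
  have e2 := fun n : ℕ => ncard_rev_comp η n (fun l => (l : ℝ) ≤ ε * (n : ℝ))
  simp only [e1, e2]
  exact h ε h0 h1

/-- Reversal and complementation carry `321` and `312` to all six patterns. -/
lemma good_all (η : Equiv.Perm (Fin 3)) : Good η := by
  have h : η = pat321 ∨ η = pat321.trans Fin.revPerm ∨ η = pat312 ∨
      η = pat312.trans Fin.revPerm ∨ η = Fin.revPerm.trans pat312 ∨
      η = (Fin.revPerm.trans pat312).trans Fin.revPerm := by
    revert η; decide
  rcases h with rfl | rfl | rfl | rfl | rfl | rfl
  · exact good_pat321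
  · exact good_pat321.rev_comp
  · exact good_pat312
  · exact good_pat312.rev_comp
  · exact good_pat312.comp_rev
  · exact good_pat312.comp_rev.rev_comp

lemma tendsto_bound : Tendsto (fun ε : ℝ => Real.log 2 + Real.log (1 + ε) - ε * Real.log ε)
    (nhdsWithin 0 (Set.Ioi 0)) (nhds (Real.log 2)) := by
  have h1 : ContinuousAt (fun ε : ℝ => Real.log 2 + Real.log (1 + ε) - ε * Real.log ε) 0 := by
    refine ContinuousAt.sub (continuousAt_const.add ?_) Real.continuous_mul_log.continuousAt
    exact ContinuousAt.log (by fun_prop) (by norm_num)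
  have h2 := h1.tendsto
  simp only [add_zero, Real.log_one, zero_mul, sub_zero] at h2
  exact h2.mono_left nhdsWithin_le_nhds

/-- For every `η ∈ S₃`, the double limit
`lim_{ε→0⁺} limₙ (1/n) log |{σ ∈ Sₙ^{av(η)} : A(σ) ≥ (1-ε)n}| = log 2`, and similarly with
`A(σ) ≤ εn`. -/
theorem altLen_extreme_counts (η : Equiv.Perm (Fin 3)) :
    ∃ U L : ℝ → ℝ,
      (∀ ε : ℝ, 0 < ε → ε < 1 →
        Filter.Tendsto (fun n : ℕ => (1 / (n : ℝ)) * Real.log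
            (({σ : Equiv.Perm (Fin n) | Avoids σ η ∧ (1 - ε) * (n : ℝ) ≤ (altLen σ : ℝ)}.ncard : ℝ)))
          Filter.atTop (nhds (U ε)) ∧
        Filter.Tendsto (fun n : ℕ => (1 / (n : ℝ)) * Real.log
            (({σ : Equiv.Perm (Fin n) | Avoids σ η ∧ (altLen σ : ℝ) ≤ ε * (n : ℝ)}.ncard : ℝ)))
          Filter.atTop (nhds (L ε))) ∧
      Filter.Tendsto U (nhdsWithin 0 (Set.Ioi 0)) (nhds (Real.log 2)) ∧
      Filter.Tendsto L (nhdsWithin 0 (Set.Ioi 0)) (nhds (Real.log 2)) := by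
  choose U hU using fun ε (h : 0 < ε ∧ ε < 1) => (good_all η ε h.1 h.2).1
  choose L hL using fun ε (h : 0 < ε ∧ ε < 1) => (good_all η ε h.1 h.2).2
  classical
  refine ⟨fun ε => if h : 0 < ε ∧ ε < 1 then U ε h else 0,
    fun ε => if h : 0 < ε ∧ ε < 1 then L ε h else 0, fun ε h0 h1 => ?_, ?_, ?_⟩
  · simp only [h0, h1, and_self, dif_pos]
    exact ⟨(hU ε ⟨h0, h1⟩).1, (hL ε ⟨h0, h1⟩).1⟩
  · refine tendsto_of_tendsto_of_tendsto_of_le_of_le' tendsto_const_nhds tendsto_bound ?_ ?_ <;>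
      filter_upwards [Ioo_mem_nhdsGT (zero_lt_one (α := ℝ))] with ε h
    · simp only [h.1, h.2, and_self, dif_pos]
      exact (hU ε h).2.1
    · simp only [h.1, h.2, and_self, dif_pos]
      exact (hU ε h).2.2
  · refine tendsto_of_tendsto_of_tendsto_of_le_of_le' tendsto_const_nhds tendsto_bound ?_ ?_ <;>
      filter_upwards [Ioo_mem_nhdsGT (zero_lt_one (α := ℝ))] with ε h
    · simp only [h.1, h.2, and_self, dif_pos]
      exact (hL ε h).2.1
    · simp only [h.1, h.2, and_self, dif_pos]
      exact (hL ε h).2.2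
end

section
/- The two roots of the quadratic polynomial (e^λ−1)²t² − 2(e^λ+1)t + 1 in t are (e^{λ/2}+1)²/(e^λ−1)² and (e^{λ/2}−1)²/(e^λ−1)², and consequently, for λ ≠ 0, the radius of convergence of Σₙ Cₙ Mₙ(λ) tⁿ (with Mₙ(λ) = E[e^{λLₙ}] under the uniform 231-avoiding measure) equals (e^{λ/2}−1)²/(e^λ−1)² = 1/(e^{λ/2}+1)². -/
/-!
Write `x = e^λ`, `s = e^{λ/2}` and `aₙ = Cₙ Mₙ(λ)`, so that `aₙ` is the sum of `x ^ lisLen σ` over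
the 231-avoiding permutations of `Fin n` (`incPoly`). In such a permutation every entry before the
maximum is smaller than every entry after it, so the permutation is a pair of shorter 231-avoiding
permutations placed around the maximum (`IsGlue`, `exists_blocks`). Its longest increasing
subsequence has length `L₁ + max 1 L₂` (`IsGlue.lisLen_eq`), which gives
`aₙ₊₁ = ∑ aₖ aₙ₋ₖ + (x - 1) aₙ` (`incPoly_succ`), i.e. `G = 1 + t (G² + (x - 1) G)`.

The quadratic polynomial of the statement is the discriminant of this equation in `G`, and its
smaller root is `R = 1 / (1 + s)²`. No singularity analysis is needed:

* at `t = R` the equation has the double root `G = 1 + s`, and the partial sums stay below this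
  fixed point by induction (`partial_sum_le`), so the series converges for `|t| ≤ R`;
* if the series converged at some `|t| > R`, it would converge at some `r` strictly between the two
  roots, and its sum would be a real root of an equation with negative discriminant
  (`discrim_nonneg`).
-/

open Equiv Filter Real Set

/-! ### Splitting a 231-avoiding permutation at its maximum -/

/-- `σ` is obtained from permutations `τ₁` of `Fin k` and `τ₂` of `Fin m`, `k + m = n`, by writing
`τ₁`, then the maximal value `n`, then `τ₂` shifted up by `k`. -/
def IsGlue {n k m : ℕ} (h : k + m = n) (σ : Equiv.Perm (Fin (n + 1))) (τ₁ : Equiv.Perm (Fin k))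
    (τ₂ : Equiv.Perm (Fin m)) : Prop :=
  (∀ i : Fin k, (σ ⟨i, by omega⟩ : ℕ) = τ₁ i) ∧ (σ ⟨k, by omega⟩ : ℕ) = n ∧
    ∀ j : Fin m, (σ ⟨k + 1 + j, by omega⟩ : ℕ) = k + τ₂ j

theorem perm_of_injective {n : ℕ} (f : Fin n → Fin n) (hf : Function.Injective f) :
    ∃ σ : Equiv.Perm (Fin n), ∀ i, σ i = f i :=
  ⟨Equiv.ofBijective f (Finite.injective_iff_bijective.mp hf), fun _ => rfl⟩

/-- Every position of `Fin (n + 1)` lies in the left block, is the middle one, or lies in the right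
block. -/
theorem pos_cases {n k m : ℕ} (h : k + m = n) (p : Fin (n + 1)) :
    (∃ i : Fin k, p = ⟨i, by omega⟩) ∨ p = ⟨k, by omega⟩ ∨
      ∃ j : Fin m, p = ⟨k + 1 + j, by omega⟩ := by
  rcases lt_trichotomy (p : ℕ) k with hp | hp | hp
  · exact Or.inl ⟨⟨p, hp⟩, rfl⟩
  · exact Or.inr (Or.inl (Fin.ext hp))
  · exact Or.inr (Or.inr ⟨⟨p - (k + 1), by omega⟩, Fin.ext (by simp; omega)⟩)

theorem exists_glue {n k m : ℕ} (h : k + m = n) (τ₁ : Equiv.Perm (Fin k))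
    (τ₂ : Equiv.Perm (Fin m)) : ∃ σ, IsGlue h σ τ₁ τ₂ := by
  let f : Fin (n + 1) → Fin (n + 1) := fun p =>
    if h1 : (p : ℕ) < k then ⟨τ₁ ⟨p, h1⟩, by omega⟩
    else if h2 : (p : ℕ) = k then ⟨n, by omega⟩
    else ⟨k + τ₂ ⟨p - (k + 1), by omega⟩, by omega⟩
  have f1 : ∀ i : Fin k, (f ⟨i, by omega⟩ : ℕ) = τ₁ i := fun i => by simp [f]
  have f2 : (f ⟨k, by omega⟩ : ℕ) = n := by simp [f]
  have f3 : ∀ j : Fin m, (f ⟨k + 1 + j, by omega⟩ : ℕ) = k + τ₂ j := fun j => by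
    have a1 : ¬ (k + 1 + (j : ℕ) < k) := by omega
    have a2 : ¬ (k + 1 + (j : ℕ) = k) := by omega
    simp [f, a1, a2]
  have hf : Function.Injective f := by
    intro p q hpq
    have e : (f p : ℕ) = f q := congrArg _ hpq
    rcases pos_cases h p with ⟨i, rfl⟩ | rfl | ⟨i, rfl⟩ <;>
    rcases pos_cases h q with ⟨j, rfl⟩ | rfl | ⟨j, rfl⟩
    · rw [f1, f1] at e
      rw [τ₁.injective (Fin.ext e)]
    · rw [f1, f2] at e; omega
    · rw [f1, f3] at e; omega
    · rw [f1, f2] at e; omega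
    · rfl
    · rw [f2, f3] at e; omega
    · rw [f1, f3] at e; omega
    · rw [f2, f3] at e; omega
    · rw [f3, f3] at e
      rw [τ₂.injective (Fin.ext (Nat.add_left_cancel e))]
  obtain ⟨σ, hσ⟩ := perm_of_injective f hf
  exact ⟨σ, fun i => by rw [hσ, f1], by rw [hσ, f2], fun j => by rw [hσ, f3]⟩

theorem IsGlue.right_unique {n k m : ℕ} {h : k + m = n} {σ : Equiv.Perm (Fin (n + 1))}
    {τ₁ τ₁' : Equiv.Perm (Fin k)} {τ₂ τ₂' : Equiv.Perm (Fin m)} (g : IsGlue h σ τ₁ τ₂)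
    (g' : IsGlue h σ τ₁' τ₂') : τ₁ = τ₁' ∧ τ₂ = τ₂' := by
  constructor
  · ext i
    rw [← g.1, ← g'.1]
  · ext i
    have h1 := g.2.2 i
    have h2 := g'.2.2 i
    omega

theorem IsGlue.left_unique {n k m : ℕ} {h : k + m = n} {σ σ' : Equiv.Perm (Fin (n + 1))}
    {τ₁ : Equiv.Perm (Fin k)} {τ₂ : Equiv.Perm (Fin m)} (g : IsGlue h σ τ₁ τ₂)
    (g' : IsGlue h σ' τ₁ τ₂) : σ = σ' := by
  ext p
  rcases pos_cases h p with ⟨i, rfl⟩ | rfl | ⟨i, rfl⟩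
  · rw [g.1, g'.1]
  · rw [g.2.1, g'.2.1]
  · rw [g.2.2, g'.2.2]

/-- Around the maximum of a 231-avoiding permutation, every entry to the left is smaller than every
entry to the right; counting then shows that the left entries are exactly the `k` smallest. -/
theorem exists_blocks {n k m : ℕ} (h : k + m = n) (σ : Equiv.Perm (Fin (n + 1)))
    (hσ : Avoids231 σ) (hk : (σ ⟨k, by omega⟩ : ℕ) = n) : ∃ τ₁ τ₂, IsGlue h σ τ₁ τ₂ := by
  have key : ∀ p q : Fin (n + 1), (p : ℕ) < k → k < (q : ℕ) → σ p < σ q := by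
    intro p q hp hq
    by_contra hc
    have hne : σ q ≠ σ p := fun e => by
      have := congrArg Fin.val (σ.injective e)
      omega
    have hne' : (σ p : ℕ) ≠ n := fun e => by
      have := congrArg Fin.val (σ.injective (Fin.ext (e.trans hk.symm)))
      simp at this
      omega
    refine hσ ⟨p, ⟨k, by omega⟩, q, hp, hq, lt_of_le_of_ne (not_lt.mp hc) hne, ?_⟩
    rw [Fin.lt_def, hk]
    omega
  have hleft : ∀ p : Fin (n + 1), (p : ℕ) < k → (σ p : ℕ) < k := by
    intro p hp
    have hsub : (Finset.Ici (⟨k, by omega⟩ : Fin (n + 1))).map σ.toEmbedding ⊆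
        Finset.Ioi (σ p) := by
      intro v hv
      obtain ⟨q, hq, rfl⟩ := Finset.mem_map.mp hv
      rw [Finset.mem_Ici, Fin.le_def] at hq
      rw [Finset.mem_Ioi]
      rcases Nat.eq_or_lt_of_le hq with e | e
      · have hq' : q = ⟨k, by omega⟩ := Fin.ext e.symm
        change σ p < σ q
        refine lt_of_le_of_ne (by rw [hq', Fin.le_def, hk]; omega) fun e' => ?_
        have := congrArg Fin.val (σ.injective e')
        simp only at e
        omega
      · exact key p q hp e
    have := Finset.card_le_card hsub
    rw [Finset.card_map, Fin.card_Ici, Fin.card_Ioi] at this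
    simp only at this
    omega
  have hright : ∀ q : Fin (n + 1), k < (q : ℕ) → k ≤ (σ q : ℕ) := by
    intro q hq
    have hsub : (Finset.Iio (⟨k, by omega⟩ : Fin (n + 1))).map σ.toEmbedding ⊆
        Finset.Iio (σ q) := by
      intro v hv
      obtain ⟨p, hp, rfl⟩ := Finset.mem_map.mp hv
      rw [Finset.mem_Iio, Fin.lt_def] at hp
      exact Finset.mem_Iio.mpr (key p q hp hq)
    have := Finset.card_le_card hsub
    rwa [Finset.card_map, Fin.card_Iio, Fin.card_Iio] at this
  have hright' : ∀ q : Fin (n + 1), k < (q : ℕ) → (σ q : ℕ) < n := by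
    intro q hq
    refine lt_of_le_of_ne (by omega) fun e => ?_
    have := congrArg Fin.val (σ.injective (Fin.ext (e.trans hk.symm)))
    simp at this
    omega
  obtain ⟨τ₁, h₁⟩ := perm_of_injective
    (fun i : Fin k => (⟨σ ⟨i, by omega⟩, hleft _ i.2⟩ : Fin k)) (by
      intro i j e
      have e' := congrArg Fin.val e
      have := congrArg Fin.val (σ.injective (Fin.ext e'))
      exact Fin.ext this)
  have hr : ∀ j : Fin m, k ≤ (σ ⟨k + 1 + j, by omega⟩ : ℕ) ∧
      (σ ⟨k + 1 + j, by omega⟩ : ℕ) < n := fun j =>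
    ⟨hright _ (by simp; omega), hright' _ (by simp; omega)⟩
  obtain ⟨τ₂, h₂⟩ := perm_of_injective
    (fun j : Fin m => (⟨(σ ⟨k + 1 + j, by omega⟩ : ℕ) - k, by have := hr j; omega⟩ : Fin m)) (by
      intro i j e
      have e' := congrArg Fin.val e
      have hi := hr i
      have hj := hr j
      simp only at e'
      have := congrArg Fin.val (σ.injective (Fin.ext
        (show (σ ⟨k + 1 + i, by omega⟩ : ℕ) = σ ⟨k + 1 + j, by omega⟩ by omega)))
      simp only at this
      exact Fin.ext (by omega))
  refine ⟨τ₁, τ₂, fun i => by rw [h₁], hk, fun j => ?_⟩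
  have := hr j
  rw [h₂]
  simp only
  omega

theorem IsGlue.avoids_iff {n k m : ℕ} {h : k + m = n} {σ : Equiv.Perm (Fin (n + 1))}
    {τ₁ : Equiv.Perm (Fin k)} {τ₂ : Equiv.Perm (Fin m)} (g : IsGlue h σ τ₁ τ₂) :
    Avoids231 σ ↔ Avoids231 τ₁ ∧ Avoids231 τ₂ := by
  obtain ⟨g1, g2, g3⟩ := g
  constructor
  · intro hσ
    constructor
    · rintro ⟨a, b, c, hab, hbc, h1, h2⟩
      exact hσ ⟨⟨a, by omega⟩, ⟨b, by omega⟩, ⟨c, by omega⟩, hab, hbc,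
        by rw [Fin.lt_def, g1, g1]; exact h1, by rw [Fin.lt_def, g1, g1]; exact h2⟩
    · rintro ⟨a, b, c, hab, hbc, h1, h2⟩
      exact hσ ⟨⟨k + 1 + a, by omega⟩, ⟨k + 1 + b, by omega⟩, ⟨k + 1 + c, by omega⟩,
        by simpa using hab, by simpa using hbc,
        by rw [Fin.lt_def, g3, g3]; omega, by rw [Fin.lt_def, g3, g3]; omega⟩
  · rintro ⟨hτ₁, hτ₂⟩ ⟨a, b, c, hab, hbc, h1, h2⟩
    rw [Fin.lt_def] at hab hbc h1 h2
    rcases pos_cases h a with ⟨i, rfl⟩ | rfl | ⟨i, rfl⟩ <;>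
    rcases pos_cases h c with ⟨l, rfl⟩ | rfl | ⟨l, rfl⟩ <;>
    simp only [g1, g2, g3] at hab hbc h1 h2 <;> try omega
    · rcases pos_cases h b with ⟨j, rfl⟩ | rfl | ⟨j, rfl⟩ <;>
      simp only [g1, g2, g3] at hab hbc h1 h2 <;> try omega
      exact hτ₁ ⟨i, j, l, hab, hbc, h1, h2⟩
    · rcases pos_cases h b with ⟨j, rfl⟩ | rfl | ⟨j, rfl⟩ <;>
      simp only [g1, g2, g3] at hab hbc h1 h2 <;> try omega
      exact hτ₂ ⟨i, j, l, by rw [Fin.lt_def]; omega, by rw [Fin.lt_def]; omega,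
        by rw [Fin.lt_def]; omega, by rw [Fin.lt_def]; omega⟩

/-! ### The longest increasing subsequence -/

theorem lisLen_bddAbove {n : ℕ} (σ : Equiv.Perm (Fin n)) :
    BddAbove {k | ∃ f : Fin k → Fin n, StrictMono f ∧ StrictMono (⇑σ ∘ f)} := by
  refine ⟨n, ?_⟩
  rintro k ⟨f, hf, -⟩
  simpa using Fintype.card_le_of_injective f hf.injective

theorem card_le_lisLen {n : ℕ} (σ : Equiv.Perm (Fin n)) (s : Finset (Fin n))
    (hs : ∀ a ∈ s, ∀ b ∈ s, a < b → σ a < σ b) : s.card ≤ lisLen σ :=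
  le_csSup (lisLen_bddAbove σ) ⟨s.orderEmbOfFin rfl, (s.orderEmbOfFin rfl).strictMono,
    fun _ _ hij => hs _ (s.orderEmbOfFin_mem rfl _) _ (s.orderEmbOfFin_mem rfl _)
      ((s.orderEmbOfFin rfl).strictMono hij)⟩

theorem exists_card_eq_lisLen {n : ℕ} (σ : Equiv.Perm (Fin n)) :
    ∃ s : Finset (Fin n), (∀ a ∈ s, ∀ b ∈ s, a < b → σ a < σ b) ∧ s.card = lisLen σ := by
  have hne : {k | ∃ f : Fin k → Fin n, StrictMono f ∧ StrictMono (⇑σ ∘ f)}.Nonempty :=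
    ⟨0, Fin.elim0, fun a => a.elim0, fun a => a.elim0⟩
  obtain ⟨f, hf, hσf⟩ := Nat.sSup_mem hne (lisLen_bddAbove σ)
  refine ⟨Finset.univ.map ⟨f, hf.injective⟩, ?_, by rw [Finset.card_map]; simp [lisLen]⟩
  intro a ha b hb hab
  obtain ⟨i, -, rfl⟩ := Finset.mem_map.mp ha
  obtain ⟨j, -, rfl⟩ := Finset.mem_map.mp hb
  exact hσf (hf.lt_iff_lt.mp hab)

theorem one_le_lisLen {n : ℕ} (hn : n ≠ 0) (σ : Equiv.Perm (Fin n)) : 1 ≤ lisLen σ := by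
  refine le_trans (by simp) (card_le_lisLen σ {⟨0, Nat.pos_of_ne_zero hn⟩} ?_)
  intro a ha b hb hab
  rw [Finset.mem_singleton] at ha hb
  exact absurd hab (by simp [ha, hb])

theorem lisLen_zero (σ : Equiv.Perm (Fin 0)) : lisLen σ = 0 := by
  obtain ⟨s, -, hs⟩ := exists_card_eq_lisLen σ
  rw [← hs, Finset.eq_empty_of_isEmpty s, Finset.card_empty]

/-- An increasing subsequence of a glued permutation is one of `τ₁` followed either by the maximum
alone or by one of `τ₂`. -/
theorem IsGlue.lisLen_eq {n k m : ℕ} {h : k + m = n} {σ : Equiv.Perm (Fin (n + 1))}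
    {τ₁ : Equiv.Perm (Fin k)} {τ₂ : Equiv.Perm (Fin m)} (g : IsGlue h σ τ₁ τ₂) :
    lisLen σ = lisLen τ₁ + max 1 (lisLen τ₂) := by
  obtain ⟨g1, g2, g3⟩ := g
  let e₁ : Fin k ↪ Fin (n + 1) :=
    ⟨fun i => ⟨i, by omega⟩, fun i j e => Fin.ext (by simpa using e)⟩
  let e₂ : Fin m ↪ Fin (n + 1) :=
    ⟨fun i => ⟨k + 1 + i, by omega⟩, fun i j e => Fin.ext (by simpa using e)⟩
  have v₁ : ∀ i, (e₁ i : ℕ) = i := fun _ => rfl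
  have v₂ : ∀ i, (e₂ i : ℕ) = k + 1 + i := fun _ => rfl
  have w₁ : ∀ i, (σ (e₁ i) : ℕ) = τ₁ i := g1
  have w₂ : ∀ i, (σ (e₂ i) : ℕ) = k + τ₂ i := g3
  apply le_antisymm
  · obtain ⟨s, hs, hcard⟩ := exists_card_eq_lisLen σ
    have c₁ : (Finset.univ.filter fun i => e₁ i ∈ s).card ≤ lisLen τ₁ := by
      refine card_le_lisLen _ _ fun a ha b hb hab => ?_
      have := hs _ (Finset.mem_filter.mp ha).2 _ (Finset.mem_filter.mp hb).2 hab
      rw [Fin.lt_def] at this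
      rw [w₁, w₁] at this
      exact this
    have c₂ : (Finset.univ.filter fun i => e₂ i ∈ s).card ≤ lisLen τ₂ := by
      refine card_le_lisLen _ _ fun a ha b hb hab => ?_
      have := hs _ (Finset.mem_filter.mp ha).2 _ (Finset.mem_filter.mp hb).2
        (by rw [Fin.lt_def, v₂, v₂]; omega)
      rw [Fin.lt_def] at this
      rw [w₂, w₂] at this
      exact Nat.lt_of_add_lt_add_left this
    rw [← hcard]
    by_cases hk : (⟨k, by omega⟩ : Fin (n + 1)) ∈ s
    · have hsub : s ⊆ insert ⟨k, by omega⟩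
          ((Finset.univ.filter fun i => e₁ i ∈ s).map e₁) := by
        intro p hp
        rcases pos_cases h p with ⟨i, rfl⟩ | rfl | ⟨i, rfl⟩
        · exact Finset.mem_insert_of_mem (Finset.mem_map.mpr ⟨i, Finset.mem_filter.mpr ⟨Finset.mem_univ _, hp⟩, rfl⟩)
        · exact Finset.mem_insert_self _ _
        -- nothing to the right of the maximum can follow it in an increasing subsequence
        · have := hs _ hk _ hp (by simp [Fin.lt_def]; omega)
          rw [Fin.lt_def, g2] at this
          omega
      have := (Finset.card_le_card hsub).trans (Finset.card_insert_le _ _)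
      rw [Finset.card_map] at this
      omega
    · have hsub : s ⊆ (Finset.univ.filter fun i => e₁ i ∈ s).map e₁ ∪
          (Finset.univ.filter fun i => e₂ i ∈ s).map e₂ := by
        intro p hp
        rcases pos_cases h p with ⟨i, rfl⟩ | rfl | ⟨i, rfl⟩
        · exact Finset.mem_union_left _ (Finset.mem_map.mpr ⟨i, Finset.mem_filter.mpr ⟨Finset.mem_univ _, hp⟩, rfl⟩)
        · exact absurd hp hk
        · exact Finset.mem_union_right _ (Finset.mem_map.mpr ⟨i, Finset.mem_filter.mpr ⟨Finset.mem_univ _, hp⟩, rfl⟩)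
      have := (Finset.card_le_card hsub).trans (Finset.card_union_le _ _)
      rw [Finset.card_map, Finset.card_map] at this
      omega
  · obtain ⟨s₁, hs₁, hc₁⟩ := exists_card_eq_lisLen τ₁
    obtain ⟨s₂, hs₂, hc₂⟩ := exists_card_eq_lisLen τ₂
    have i₁ : lisLen τ₁ + 1 ≤ lisLen σ := by
      have hd : (⟨k, by omega⟩ : Fin (n + 1)) ∉ s₁.map e₁ := by
        intro hm
        obtain ⟨i, -, hi⟩ := Finset.mem_map.mp hm
        have := congrArg Fin.val hi
        rw [v₁] at this
        simp only at this
        omega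
      rw [← hc₁, ← Finset.card_map e₁, ← Finset.card_insert_of_notMem hd]
      refine card_le_lisLen _ _ fun a ha b hb hab => ?_
      rw [Fin.lt_def] at hab ⊢
      rcases Finset.mem_insert.mp ha with rfl | ha <;>
      rcases Finset.mem_insert.mp hb with rfl | hb
      · omega
      · obtain ⟨j, -, rfl⟩ := Finset.mem_map.mp hb
        rw [v₁] at hab
        simp only at hab
        omega
      · obtain ⟨j, -, rfl⟩ := Finset.mem_map.mp ha
        rw [w₁, g2]
        omega
      · obtain ⟨i, hi, rfl⟩ := Finset.mem_map.mp ha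
        obtain ⟨j, hj, rfl⟩ := Finset.mem_map.mp hb
        rw [v₁, v₁] at hab
        rw [w₁, w₁]
        exact hs₁ i hi j hj hab
    have i₂ : lisLen τ₁ + lisLen τ₂ ≤ lisLen σ := by
      have hd : Disjoint (s₁.map e₁) (s₂.map e₂) := by
        rw [Finset.disjoint_left]
        intro p hp hq
        obtain ⟨i, -, rfl⟩ := Finset.mem_map.mp hp
        obtain ⟨j, -, hj⟩ := Finset.mem_map.mp hq
        have := congrArg Fin.val hj
        rw [v₁, v₂] at this
        omega
      rw [← hc₁, ← hc₂, ← Finset.card_map e₁, ← Finset.card_map e₂,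
        ← Finset.card_union_of_disjoint hd]
      refine card_le_lisLen _ _ fun a ha b hb hab => ?_
      rw [Fin.lt_def] at hab ⊢
      rcases Finset.mem_union.mp ha with ha | ha <;>
      rcases Finset.mem_union.mp hb with hb | hb <;>
      obtain ⟨i, hi, rfl⟩ := Finset.mem_map.mp ha <;>
      obtain ⟨j, hj, rfl⟩ := Finset.mem_map.mp hb
      · rw [v₁, v₁] at hab
        rw [w₁, w₁]
        exact hs₁ i hi j hj hab
      · rw [w₁, w₂]
        omega
      · rw [v₁, v₂] at hab
        omega
      · rw [v₂, v₂] at hab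
        rw [w₂, w₂]
        exact Nat.add_lt_add_left (hs₂ i hi j hj (by rw [Fin.lt_def]; omega)) k
    omega

/-! ### The recurrence for the coefficients -/

open scoped Classical in
/-- The generating polynomial of the longest increasing subsequence length over the 231-avoiding
permutations of `Fin n`, evaluated at `x`; it equals `Cₙ Mₙ(λ)` at `x = e^λ`. -/
noncomputable def incPoly (x : ℝ) (n : ℕ) : ℝ :=
  ∑ σ ∈ Finset.univ.filter (fun σ : Equiv.Perm (Fin n) => Avoids231 σ), x ^ lisLen σ

theorem catalan_mul_Minc (n : ℕ) (lam : ℝ) :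
    (catalan n : ℝ) * Minc n lam = incPoly (Real.exp lam) n := by
  have hc : (catalan n : ℝ) ≠ 0 := by
    rw [Nat.cast_ne_zero]
    intro h0
    have := succ_mul_catalan_eq_centralBinom n
    rw [h0, mul_zero] at this
    exact Nat.centralBinom_ne_zero n this.symm
  rw [Minc, mul_div_cancel₀ _ hc, incPoly]
  refine Finset.sum_congr rfl fun σ _ => ?_
  rw [mul_comm, Real.exp_nat_mul]

theorem incPoly_nonneg {x : ℝ} (hx : 0 ≤ x) (n : ℕ) : 0 ≤ incPoly x n :=
  Finset.sum_nonneg fun _ _ => pow_nonneg hx _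

theorem avoids231_zero (σ : Equiv.Perm (Fin 0)) : Avoids231 σ := fun ⟨a, _⟩ => a.elim0

theorem incPoly_zero (x : ℝ) : incPoly x 0 = 1 := by
  simp [incPoly, lisLen_zero, avoids231_zero]

open scoped Classical in
/-- The right block contributes `max 1 (lisLen σ)`, which differs from `lisLen σ` only when the
block is empty. -/
theorem sum_max_lisLen (x : ℝ) (m : ℕ) :
    ∑ σ ∈ Finset.univ.filter (fun σ : Equiv.Perm (Fin m) => Avoids231 σ), x ^ max 1 (lisLen σ) =
      incPoly x m + if m = 0 then x - 1 else 0 := by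
  rcases Nat.eq_zero_or_pos m with rfl | hm
  · rw [incPoly_zero]
    simp [lisLen_zero, avoids231_zero]
  · rw [if_neg hm.ne', add_zero, incPoly]
    refine Finset.sum_congr rfl fun σ _ => ?_
    rw [max_eq_right (one_le_lisLen hm.ne' σ)]

open scoped Classical in
/-- The contribution of the permutations whose maximum stands at position `k`. -/
theorem sum_fiber (x : ℝ) {n k m : ℕ} (h : k + m = n) :
    ∑ σ ∈ (Finset.univ.filter (fun σ : Equiv.Perm (Fin (n + 1)) => Avoids231 σ)).filter
        (fun σ => σ.symm (Fin.last n) = ⟨k, by omega⟩), x ^ lisLen σ =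
      incPoly x k * (incPoly x m + if m = 0 then x - 1 else 0) := by
  rw [← sum_max_lisLen, incPoly, Finset.sum_mul_sum, ← Finset.sum_product']
  symm
  choose G hG using fun (τ₁ : Equiv.Perm (Fin k)) (τ₂ : Equiv.Perm (Fin m)) => exists_glue h τ₁ τ₂
  refine Finset.sum_bij (fun p _ => G p.1 p.2) ?_ ?_ ?_ ?_
  · rintro ⟨τ₁, τ₂⟩ hp
    simp only [Finset.mem_product, Finset.mem_filter, Finset.mem_univ, true_and] at hp ⊢
    refine ⟨(hG τ₁ τ₂).avoids_iff.mpr hp, ?_⟩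
    rw [Equiv.symm_apply_eq]
    exact Fin.ext (hG τ₁ τ₂).2.1.symm
  · rintro ⟨τ₁, τ₂⟩ _ ⟨τ₁', τ₂'⟩ _ e
    have g := hG τ₁ τ₂
    simp only at e
    rw [e] at g
    obtain ⟨rfl, rfl⟩ := g.right_unique (hG τ₁' τ₂')
    rfl
  · intro σ hσ
    simp only [Finset.mem_filter, Finset.mem_univ, true_and] at hσ
    have hk := hσ.2
    rw [Equiv.symm_apply_eq] at hk
    obtain ⟨τ₁, τ₂, g⟩ := exists_blocks h σ hσ.1 (by rw [← hk]; rfl)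
    exact ⟨(τ₁, τ₂), by simpa using g.avoids_iff.mp hσ.1, (hG τ₁ τ₂).left_unique g⟩
  · rintro ⟨τ₁, τ₂⟩ _
    rw [(hG τ₁ τ₂).lisLen_eq, pow_add]

/-- Coefficientwise form of the functional equation `G = 1 + t (G² + (x - 1) G)`, obtained by
splitting each permutation at its maximum. -/
theorem incPoly_succ (x : ℝ) (n : ℕ) :
    incPoly x (n + 1) =
      ∑ k ∈ Finset.range (n + 1), incPoly x k * incPoly x (n - k) + (x - 1) * incPoly x n := by
  classical
  have h1 : incPoly x (n + 1) = ∑ k ∈ Finset.range (n + 1),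
      incPoly x k * (incPoly x (n - k) + if n - k = 0 then x - 1 else 0) := by
    rw [← Fin.sum_univ_eq_sum_range
      (fun k => incPoly x k * (incPoly x (n - k) + if n - k = 0 then x - 1 else 0)) (n + 1)]
    rw [incPoly, ← Finset.sum_fiberwise _ (fun σ : Equiv.Perm (Fin (n + 1)) =>
      σ.symm (Fin.last n))]
    exact Finset.sum_congr rfl fun k _ => sum_fiber x (by omega : (k : ℕ) + (n - k) = n)
  rw [h1]
  simp only [mul_add, Finset.sum_add_distrib]
  congr 1
  rw [Finset.sum_range_succ, Finset.sum_eq_zero]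
  · simp [mul_comm]
  · intro k hk
    rw [Finset.mem_range] at hk
    rw [if_neg (by omega), mul_zero]

/-! ### Convergence and divergence of the series -/

/-- The recurrence after multiplying by `r ^ (n + 1)`, in the form of a Cauchy product. -/
theorem incPoly_term (x r : ℝ) (n : ℕ) :
    incPoly x (n + 1) * r ^ (n + 1) =
      r * (∑ k ∈ Finset.range (n + 1), (incPoly x k * r ^ k) * (incPoly x (n - k) * r ^ (n - k)) +
        (x - 1) * (incPoly x n * r ^ n)) := by
  have : ∑ k ∈ Finset.range (n + 1), (incPoly x k * r ^ k) * (incPoly x (n - k) * r ^ (n - k)) =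
      (∑ k ∈ Finset.range (n + 1), incPoly x k * incPoly x (n - k)) * r ^ n := by
    rw [Finset.sum_mul]
    refine Finset.sum_congr rfl fun k hk => ?_
    rw [Finset.mem_range] at hk
    have : r ^ n = r ^ k * r ^ (n - k) := by rw [← pow_add]; congr 1; omega
    rw [this]
    ring
  rw [this, incPoly_succ]
  ring

/-- At `r = 1 / (1 + s)²` with `s² = x`, the number `1 + s` is a fixed point of
`S ↦ 1 + r (S² + (x - 1) S)`, a map that is increasing for `S ≥ 1`, and each partial sum is at most
the image of the previous one. -/
theorem partial_sum_le {s : ℝ} (hs : 0 < s) (N : ℕ) :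
    1 ≤ ∑ n ∈ Finset.range (N + 1), incPoly (s ^ 2) n * (1 / (1 + s) ^ 2) ^ n ∧
    ∑ n ∈ Finset.range (N + 1), incPoly (s ^ 2) n * (1 / (1 + s) ^ 2) ^ n ≤ 1 + s := by
  set r : ℝ := 1 / (1 + s) ^ 2 with hr
  have hr0 : 0 < r := by positivity
  have hnn : ∀ n, 0 ≤ incPoly (s ^ 2) n * r ^ n := fun n =>
    mul_nonneg (incPoly_nonneg (by positivity) n) (by positivity)
  induction N with
  | zero => simp [incPoly_zero]; exact hs.le
  | succ N ih =>
    obtain ⟨ih1, ih2⟩ := ih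
    refine ⟨ih1.trans ?_, ?_⟩
    · rw [Finset.sum_range_succ _ (N + 1)]
      linarith [hnn (N + 1)]
    · rw [Finset.sum_range_succ', incPoly_zero, Finset.sum_congr rfl fun n _ => incPoly_term _ r n,
        ← Finset.mul_sum, Finset.sum_add_distrib, ← Finset.mul_sum]
      set S := ∑ n ∈ Finset.range (N + 1), incPoly (s ^ 2) n * r ^ n with hS
      have hconv : ∑ n ∈ Finset.range (N + 1), ∑ k ∈ Finset.range (n + 1),
          (incPoly (s ^ 2) k * r ^ k) * (incPoly (s ^ 2) (n - k) * r ^ (n - k)) ≤ S * S := by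
        rw [Finset.sum_range_diag_flip (N + 1) (fun i j =>
          (incPoly (s ^ 2) i * r ^ i) * (incPoly (s ^ 2) j * r ^ j)), hS, Finset.sum_mul_sum]
        refine Finset.sum_le_sum fun i _ => ?_
        refine Finset.sum_le_sum_of_subset_of_nonneg ?_ fun j _ _ => mul_nonneg (hnn i) (hnn j)
        exact Finset.range_mono (by omega)
      have hfix : r * ((1 + s) * (1 + s) + (s ^ 2 - 1) * (1 + s)) = s := by
        rw [hr]
        field_simp
        ring
      have hmono : S * S + (s ^ 2 - 1) * S ≤ (1 + s) * (1 + s) + (s ^ 2 - 1) * (1 + s) := by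
        nlinarith [mul_nonneg (sub_nonneg.mpr ih2) (by nlinarith : (0:ℝ) ≤ 1 + s + S + s ^ 2 - 1)]
      have := mul_le_mul_of_nonneg_left ((add_le_add_left hconv _).trans hmono) hr0.le
      simp only [pow_zero, mul_one]
      linarith

theorem summable_at_radius {s : ℝ} (hs : 0 < s) :
    Summable fun n => incPoly (s ^ 2) n * (1 / (1 + s) ^ 2) ^ n := by
  refine summable_of_sum_range_le (c := 1 + s) (fun n =>
    mul_nonneg (incPoly_nonneg (by positivity) n) (by positivity)) fun N => ?_
  refine le_trans ?_ (partial_sum_le hs N).2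
  rw [Finset.sum_range_succ]
  have : 0 ≤ incPoly (s ^ 2) N * (1 / (1 + s) ^ 2) ^ N :=
    mul_nonneg (incPoly_nonneg (by positivity) N) (by positivity)
  linarith

theorem summable_of_abs_le {x : ℝ} {r t : ℝ} (h : Summable fun n => incPoly x n * r ^ n)
    (hrt : |t| ≤ |r|) : Summable fun n => incPoly x n * t ^ n := by
  refine Summable.of_norm_bounded h.abs fun n => ?_
  rw [Real.norm_eq_abs, abs_mul, abs_mul, abs_pow, abs_pow]
  gcongr

/-- Where the series converges, its sum is a real root of the quadratic
`r G² + (r (x - 1) - 1) G + 1`, so the discriminant is nonnegative. -/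
theorem discrim_nonneg {x r : ℝ} (h : Summable fun n => incPoly x n * r ^ n) :
    0 ≤ (x - 1) ^ 2 * r ^ 2 - 2 * (x + 1) * r + 1 := by
  set G := ∑' n, incPoly x n * r ^ n with hG
  have hn : Summable fun n => ‖incPoly x n * r ^ n‖ := h.abs
  have hconv := tsum_mul_tsum_eq_tsum_sum_range_of_summable_norm hn hn
  have hs := (summable_norm_sum_mul_range_of_summable_norm hn hn).of_norm
  have hfun : G = 1 + r * (G * G + (x - 1) * G) := by
    have h0 := h.tsum_eq_zero_add
    rw [incPoly_zero, tsum_congr (fun n => incPoly_term x r n), tsum_mul_left,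
      hs.tsum_add (h.mul_left _), tsum_mul_left, ← hconv, ← hG] at h0
    simpa using h0
  have : (x - 1) ^ 2 * r ^ 2 - 2 * (x + 1) * r + 1 = (2 * r * G - (1 - r * (x - 1))) ^ 2 := by
    linear_combination (4 * r) * hfun
  rw [this]
  positivity

/-- The roots of `(e^λ-1)²t² - 2(e^λ+1)t + 1` are `(e^{λ/2}±1)²/(e^λ-1)²`, and for `λ ≠ 0`
the radius of convergence of `Σₙ Cₙ Mₙ(λ) tⁿ` (with `Mₙ` the MGF of `Lₙ` under the uniform
231-avoiding measure) equals `(e^{λ/2}-1)²/(e^λ-1)² = 1/(e^{λ/2}+1)²`. -/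
theorem inc_series_radius (lam : ℝ) (hlam : lam ≠ 0) :
    (∀ t : ℝ, (Real.exp lam - 1) ^ 2 * t ^ 2 - 2 * (Real.exp lam + 1) * t + 1 = 0 ↔
      t = (Real.exp (lam / 2) + 1) ^ 2 / (Real.exp lam - 1) ^ 2 ∨
      t = (Real.exp (lam / 2) - 1) ^ 2 / (Real.exp lam - 1) ^ 2) ∧
    (Real.exp (lam / 2) - 1) ^ 2 / (Real.exp lam - 1) ^ 2 =
      1 / (Real.exp (lam / 2) + 1) ^ 2 ∧
    (∀ t : ℝ, |t| < (Real.exp (lam / 2) - 1) ^ 2 / (Real.exp lam - 1) ^ 2 →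
      Summable (fun n : ℕ => (catalan n : ℝ) * Minc n lam * t ^ n)) ∧
    (∀ t : ℝ, (Real.exp (lam / 2) - 1) ^ 2 / (Real.exp lam - 1) ^ 2 < |t| →
      ¬ Summable (fun n : ℕ => (catalan n : ℝ) * Minc n lam * t ^ n)) := by
  simp only [catalan_mul_Minc]
  have hx : Real.exp lam = Real.exp (lam / 2) ^ 2 := by
    rw [← Real.exp_nat_mul]
    congr 1
    push_cast
    ring
  have hs1 : Real.exp (lam / 2) - 1 ≠ 0 := by
    rw [sub_ne_zero, Ne, Real.exp_eq_one_iff]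
    intro h
    exact hlam (by linarith)
  rw [hx]
  have hs : 0 < Real.exp (lam / 2) := Real.exp_pos _
  generalize Real.exp (lam / 2) = s at hs hs1
  have hs2 : s + 1 ≠ 0 := by positivity
  have hfac : (s ^ 2 - 1) ^ 2 = (s - 1) ^ 2 * (s + 1) ^ 2 := by ring
  have hne : s ^ 2 - 1 ≠ 0 := by
    rw [show s ^ 2 - 1 = (s - 1) * (s + 1) by ring]
    exact mul_ne_zero hs1 hs2
  have hR : (s - 1) ^ 2 / (s ^ 2 - 1) ^ 2 = 1 / (s + 1) ^ 2 := by
    rw [hfac]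
    field_simp
  have hR' : (s + 1) ^ 2 / (s ^ 2 - 1) ^ 2 = 1 / (s - 1) ^ 2 := by
    rw [hfac]
    field_simp
  have hpoly : ∀ t : ℝ, (s ^ 2 - 1) ^ 2 * t ^ 2 - 2 * (s ^ 2 + 1) * t + 1 =
      (s ^ 2 - 1) ^ 2 * ((t - 1 / (s - 1) ^ 2) * (t - 1 / (s + 1) ^ 2)) := by
    intro t
    rw [hfac]
    field_simp
    ring
  rw [hR, hR']
  refine ⟨fun t => ?_, rfl, fun t ht => ?_, fun t ht hsum => ?_⟩
  · rw [hpoly, mul_eq_zero, mul_eq_zero, sub_eq_zero, sub_eq_zero]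
    simp [hne]
  · rw [add_comm s 1] at ht
    exact summable_of_abs_le (summable_at_radius hs) (ht.le.trans (le_abs_self _))
  -- strictly between the two roots the discriminant is negative
  · have hlt : 1 / (s + 1) ^ 2 < 1 / (s - 1) ^ 2 := by
      apply one_div_lt_one_div_of_lt (by positivity)
      nlinarith
    obtain ⟨r, hr1, hr2⟩ := exists_between (lt_min ht hlt)
    have hr0 : 0 < r := lt_trans (by positivity) hr1
    have hsr := summable_of_abs_le (t := r) hsum
      (by rw [abs_of_pos hr0]; exact hr2.le.trans (min_le_left _ _))
    have hd := discrim_nonneg hsr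
    rw [hpoly] at hd
    have hneg : (r - 1 / (s - 1) ^ 2) * (r - 1 / (s + 1) ^ 2) < 0 :=
      mul_neg_of_neg_of_pos (sub_neg.mpr (hr2.trans_le (min_le_right _ _))) (sub_pos.mpr hr1)
    have := mul_neg_of_pos_of_neg (by positivity : 0 < (s ^ 2 - 1) ^ 2) hneg
    linarith
end
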